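/- arXiv:1908.06483 — 2 statements merged into one kernel-verified Lean document; each statement's English description precedes it below -/
import Mathlib

section
/- For every A ≥ 1 there exist a constant C > 0 and an exponent θ ∈ (0,1) such that for all a ∈ [1,A] and all k ≥ 1, the k-th Dirichlet biharmonic eigenvalue of the rectangle R_a satisfies λ_k(a)^{1/2} ≥ 4πk + 2(a + 1/a)·λ_k(a)^{1/4} − C·λ_k(a)^{θ/4} − 3π. -/
open MeasureTheory Real Filter

noncomputable section

/-- Directional (partial) derivative of `u : ℝ × ℝ → ℝ` in direction `v`. -/
def pd (v : ℝ × ℝ) (u : ℝ × ℝ → ℝ) : ℝ × ℝ → ℝ := fun p => fderiv ℝ u p v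

/-- Second partial derivative `∂²u/∂x²`. -/
def uxx (u : ℝ × ℝ → ℝ) : ℝ × ℝ → ℝ := pd (1, 0) (pd (1, 0) u)

/-- Second partial derivative `∂²u/∂y²`. -/
def uyy (u : ℝ × ℝ → ℝ) : ℝ × ℝ → ℝ := pd (0, 1) (pd (0, 1) u)

/-- Mixed second partial derivative `∂²u/∂x∂y`. -/
def uxy (u : ℝ × ℝ → ℝ) : ℝ × ℝ → ℝ := pd (0, 1) (pd (1, 0) u)

/-- The Laplacian `Δu = u_xx + u_yy`. -/
def lap (u : ℝ × ℝ → ℝ) : ℝ × ℝ → ℝ := fun p => uxx u p + uyy u p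

/-- The open rectangle `R_a = (0,a) × (0,1/a)` of unit area. -/
def Rect (a : ℝ) : Set (ℝ × ℝ) := Set.Ioo 0 a ×ˢ Set.Ioo 0 (1 / a)

/-- Admissible test functions: smooth, compactly supported inside `Ω`. -/
def Adm (Ω : Set (ℝ × ℝ)) (u : ℝ × ℝ → ℝ) : Prop :=
  ContDiff ℝ (⊤ : ℕ∞) u ∧ HasCompactSupport u ∧ tsupport u ⊆ Ω

/-- First Dirichlet eigenvalue of the biharmonic operator on `R_a`,
characterized variationally as the infimum of the Rayleigh quotient. -/
def lam1 (a : ℝ) : ℝ :=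
  sInf { μ | ∃ u : ℝ × ℝ → ℝ, Adm (Rect a) u ∧ u ≠ 0 ∧
    μ = (∫ p, (lap u p) ^ 2) / (∫ p, (u p) ^ 2) }

/-- `k`-th Dirichlet eigenvalue of the biharmonic operator on `R_a`:
infimum over linearly independent `k`-tuples of admissible functions of the
maximum of the Rayleigh quotient over nonzero linear combinations. -/
def lamk (k : ℕ) (a : ℝ) : ℝ :=
  sInf { μ | ∃ u : Fin k → (ℝ × ℝ → ℝ), (∀ i, Adm (Rect a) (u i)) ∧
    LinearIndependent ℝ u ∧
    μ = sSup { r | ∃ c : Fin k → ℝ, c ≠ 0 ∧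
      r = (∫ p, (lap (fun q => ∑ i, c i * u i q) p) ^ 2) /
          (∫ p, (∑ i, c i * u i p) ^ 2) } }

/-!
Let every Rayleigh quotient on the span of `k` test functions be at most `ρ`. Integration by parts
multiplies the sine coefficient of index `(m, n)` by `-μ`, where `μ = (m π / a)² + (n π a)²`, on
passing from `u` to `Δu`. So, by Parseval's identity for `u` and `Δu`, a nonzero function of the
span cannot be orthogonal to all the products of sines with `μ² ≤ ρ`. By linear algebra `k` is
therefore at most the number of points with positive integer coordinates in an ellipse, and it
remains to bound this number by the area of the quarter ellipse minus half the sum of its semiaxes,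
up to an error of smaller order.

Counting by columns gives a sum of heights minus the sum of their fractional parts. The height is a
concave function, so the trapezoidal rule bounds the sum of heights by the area minus half of the
vertical semiaxis. Half of the horizontal semiaxis comes from the fractional parts, whose average is
at least nearly `1 / 2`: the arc is close to linear on short blocks of columns, and a linear
function with slope `p / q` has fractional parts averaging at least `(q - 1) / (2 * q)` over `q`
consecutive columns. This is useless only when the slope is near a rational number of small
denominator, which is rare because the curvature of the ellipse keeps the slopes apart.
-/

open scoped fwdDiff

/-! ### Fractional parts along a concave sequence -/

lemma sum_range_emod_add_mul {p : ℤ} {q : ℕ} (hpq : IsCoprime p q) (m : ℤ) :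
    ∑ h ∈ Finset.range q, (m + h * p) % q = ∑ j ∈ Finset.range q, (j : ℤ) := by
  have toNat_emod : ∀ h ∈ Finset.range q,
      (((m + h * p) % q).toNat : ℤ) = (m + h * p) % q := fun h hh =>
    Int.toNat_of_nonneg (Int.emod_nonneg _ (by grind))
  have mapsTo : Set.MapsTo (fun h : ℕ => ((m + h * p) % q).toNat)
      (Finset.range q) (Finset.range q) := by
    intro h hh
    have emod_lt := Int.emod_lt_of_pos (m + h * p) (b := q) (by grind)
    have := toNat_emod h hh
    grind
  have injOn : Set.InjOn (fun h : ℕ => ((m + h * p) % q).toNat) (Finset.range q) := by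
    intro h hh h' hh' heq
    have emod_eq : m + h * p ≡ m + h' * p [ZMOD q] := by
      rw [Int.ModEq, ← toNat_emod h hh, ← toNat_emod h' hh']
      exact congrArg Nat.cast heq
    have modEq : (h : ℤ) ≡ h' [ZMOD q] := by
      refine Int.modEq_iff_dvd.2 (hpq.symm.dvd_of_dvd_mul_right ?_)
      rw [sub_mul]
      exact (emod_eq.add_left_cancel' m).dvd
    exact (Int.natCast_modEq_iff.1 modEq).eq_of_lt_of_lt (by simpa using hh) (by simpa using hh')
  exact Finset.sum_nbij _ mapsTo injOn
    (Finset.surjOn_of_injOn_of_card_le _ mapsTo injOn le_rfl) fun h hh => (toNat_emod h hh).symm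

lemma floor_mul_emod_div_le_fract {q : ℕ} (hq : 0 < q) (z : ℝ) :
    ((⌊q * z⌋ % q : ℤ) : ℝ) / q ≤ Int.fract z := by
  have hq0 : (0 : ℝ) < q := mod_cast hq
  have floor_ediv : ⌊q * z⌋ / (q : ℤ) = ⌊z⌋ := by
    rw [← Int.floor_div_natCast, mul_div_cancel_left₀ _ hq0.ne']
  rw [Int.emod_def, floor_ediv, div_le_iff₀ hq0, Int.fract]
  push_cast
  linarith [Int.floor_le (q * z)]

lemma half_le_sum_fract_arith {p : ℤ} {q : ℕ} (hq : 0 < q) (hpq : IsCoprime p q) (x : ℝ) :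
    ((q : ℝ) - 1) / 2 ≤ ∑ h ∈ Finset.range q, Int.fract (x + h * (p / q)) := by
  have hq0 : (q : ℝ) ≠ 0 := mod_cast hq.ne'
  have gauss : ∀ n : ℕ, ∑ j ∈ Finset.range n, (j : ℝ) = n * (n - 1) / 2 := by
    intro n
    induction n with
    | zero => simp
    | succ n ih => rw [Finset.sum_range_succ, ih]; push_cast; ring
  have residues : ∀ h : ℕ, ⌊(q : ℝ) * (x + h * (p / q))⌋ = ⌊q * x⌋ + h * p := by
    intro h
    rw [← Int.floor_add_intCast]
    congr 1
    push_cast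
    field_simp
  calc ((q : ℝ) - 1) / 2
      = ((∑ h ∈ Finset.range q, (⌊q * x⌋ + h * p) % q : ℤ) : ℝ) / q := by
        rw [sum_range_emod_add_mul hpq]
        push_cast
        rw [gauss]
        field_simp
    _ = ∑ h ∈ Finset.range q, ((⌊(q : ℝ) * (x + h * (p / q))⌋ % q : ℤ) : ℝ) / q := by
        simp only [residues, Int.cast_sum, Finset.sum_div]
    _ ≤ _ := Finset.sum_le_sum fun h _ => floor_mul_emod_div_le_fract hq _

lemma fract_add_sub_le_fract {y z δ : ℝ} (h : |y - z| ≤ δ) :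
    Int.fract (z + δ) - 2 * δ ≤ Int.fract y := by
  have hyz := abs_le.1 h
  have floor_le : (⌊y⌋ : ℝ) ≤ ⌊z + δ⌋ := mod_cast Int.floor_le_floor (by linarith)
  rw [Int.fract, Int.fract]
  linarith

lemma half_le_sum_fract_near_arith {p : ℤ} {q : ℕ} (hq : 0 < q) (hpq : IsCoprime p q) {x δ : ℝ}
    {y : ℕ → ℝ} (hy : ∀ h < q, |y h - (x + h * (p / q))| ≤ δ) :
    ((q : ℝ) - 1) / 2 - 2 * q * δ ≤ ∑ h ∈ Finset.range q, Int.fract (y h) := by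
  calc ((q : ℝ) - 1) / 2 - 2 * q * δ
      ≤ ∑ h ∈ Finset.range q, Int.fract (x + δ + h * (p / q)) - 2 * q * δ := by
        gcongr
        exact half_le_sum_fract_arith hq hpq _
    _ = ∑ h ∈ Finset.range q, (Int.fract (x + h * (p / q) + δ) - 2 * δ) := by
        simp only [Finset.sum_sub_distrib, Finset.sum_const, Finset.card_range, nsmul_eq_mul,
          add_right_comm]
        ring
    _ ≤ _ := Finset.sum_le_sum fun h hh => fract_add_sub_le_fract (hy h (Finset.mem_range.1 hh))

lemma mul_le_sub_of_forall_le_sub {s : ℕ → ℝ} {N : ℕ} {κ : ℝ}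
    (hs : ∀ n, n + 1 < N → κ ≤ s n - s (n + 1)) {n h : ℕ} (hn : n + h < N) :
    h * κ ≤ s n - s (n + h) := by
  induction h with
  | zero => simp
  | succ h ih =>
    have step := hs (n + h) hn
    have := ih (by omega)
    rw [← add_assoc]
    push_cast
    linarith

lemma abs_sub_tangent_le {g : ℕ → ℝ} {N : ℕ} {μ : ℝ} (hμ : 0 ≤ μ)
    (hg : ∀ n, n + 1 < N → Δ_[1] g n - Δ_[1] g (n + 1) ∈ Set.Icc 0 μ) {n h : ℕ}
    (hn : n + h ≤ N) :
    |g (n + h) - (g n + h * Δ_[1] g n)| ≤ h ^ 2 * μ := by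
  induction h with
  | zero => simp
  | succ h ih =>
    have drop_nonneg := mul_le_sub_of_forall_le_sub (fun i hi => (hg i hi).1)
      (show n + h < N by omega)
    have drop_le := mul_le_sub_of_forall_le_sub (s := fun i => -Δ_[1] g i) (κ := -μ)
      (fun i hi => by linarith [(hg i hi).2]) (show n + h < N by omega)
    have next : g (n + (h + 1)) = g (n + h) + Δ_[1] g (n + h) := by
      simp only [fwdDiff, add_assoc]; ring
    have : 0 ≤ h * μ := by positivity
    have := abs_le.1 (ih (by omega))
    rw [next, abs_le]
    push_cast
    constructor <;> linarith

lemma exists_rat_abs_sub_le_div_den {Q : ℝ} (hQ : 1 ≤ Q) (ξ : ℝ) :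
    ∃ r : ℚ, |ξ - r| ≤ 1 / (Q * r.den) ∧ r.den ≤ Q := by
  obtain ⟨r, hr, hden⟩ := Real.exists_rat_abs_sub_le_and_den_le ξ (Nat.floor_pos.2 hQ)
  have : (0 : ℝ) < r.den := mod_cast r.den_pos
  refine ⟨r, hr.trans ?_, (Nat.le_floor_iff (by linarith)).1 hden⟩
  have := (Nat.lt_floor_add_one Q).le
  gcongr

lemma half_le_sum_fract_block {g : ℕ → ℝ} {N : ℕ} {μ Q : ℝ} (hμ : 0 ≤ μ) (hQ : 1 ≤ Q)
    (hg : ∀ n, n + 1 < N → Δ_[1] g n - Δ_[1] g (n + 1) ∈ Set.Icc 0 μ) {n : ℕ} {r : ℚ}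
    (hr : |Δ_[1] g n - r| ≤ 1 / (Q * r.den)) (hrQ : r.den ≤ Q) (hn : n + r.den ≤ N) :
    (r.den : ℝ) / 2 - (5 / 2 + 2 * μ * Q ^ 3)
      ≤ ∑ h ∈ Finset.range r.den, Int.fract (g (n + h)) := by
  have : (0 : ℝ) < r.den := mod_cast r.den_pos
  have hcop : IsCoprime r.num (r.den : ℤ) := by
    rw [Int.isCoprime_iff_nat_coprime]
    exact r.reduced
  have near : ∀ h < r.den, |g (n + h) - (g n + h * (r.num / r.den))| ≤ 1 / Q + Q ^ 2 * μ := by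
    intro h hh
    have hhr : (h : ℝ) ≤ r.den := mod_cast hh.le
    have slope_error : |(h : ℝ) * (Δ_[1] g n - r)| ≤ 1 / Q := by
      rw [abs_mul, Nat.abs_cast]
      calc (h : ℝ) * |Δ_[1] g n - r| ≤ r.den * (1 / (Q * r.den)) := by gcongr
        _ = 1 / Q := by field_simp
    have curvature_error : |g (n + h) - (g n + h * Δ_[1] g n)| ≤ Q ^ 2 * μ :=
      (abs_sub_tangent_le hμ hg (by omega)).trans (by gcongr; exact hhr.trans hrQ)
    rw [← Rat.cast_def, show g (n + h) - (g n + h * (r : ℝ)) =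
      h * (Δ_[1] g n - r) + (g (n + h) - (g n + h * Δ_[1] g n)) by ring]
    exact (abs_add_le _ _).trans (add_le_add slope_error curvature_error)
  refine le_trans ?_ (half_le_sum_fract_near_arith r.den_pos hcop near)
  have : 2 * r.den * (1 / Q + Q ^ 2 * μ) ≤ 2 + 2 * μ * Q ^ 3 := by
    calc 2 * r.den * (1 / Q + Q ^ 2 * μ) ≤ 2 * Q * (1 / Q + Q ^ 2 * μ) := by gcongr
      _ = 2 + 2 * μ * Q ^ 3 := by field_simp
  linarith

-- Greedy decomposition from the left: step over a single index where `P` holds and over a whole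
-- block elsewhere; only a last block sticking out of the range is lost, at a cost of at most `Q`.
open Classical in
lemma half_le_sum_Ico_of_exists_block {f : ℕ → ℝ} {N : ℕ} {P : ℕ → Prop} {K Q D : ℝ}
    (hK : 0 < K) (hQ : 0 ≤ Q) (hD : 0 ≤ D) (hf : ∀ n, 0 ≤ f n)
    (hblock : ∀ n, ¬ P n → ∃ q : ℕ, K ≤ q ∧ q ≤ Q ∧
      (n + q ≤ N → q / 2 - D ≤ ∑ h ∈ Finset.range q, f (n + h))) {n : ℕ} (hn : n ≤ N) :
    ((N : ℝ) - n) / 2 - D * ((N - n) / K) - {i ∈ Finset.Ico n N | P i}.card - Q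
      ≤ ∑ i ∈ Finset.Ico n N, f i := by
  induction hd : N - n using Nat.strong_induction_on generalizing n with
  | _ d ih =>
  have hnN : (n : ℝ) ≤ N := mod_cast hn
  have sum_nonneg : 0 ≤ ∑ i ∈ Finset.Ico n N, f i := Finset.sum_nonneg fun i _ => hf i
  have error_nonneg : 0 ≤ D * ((N - n) / K) :=
    mul_nonneg hD (div_nonneg (sub_nonneg.2 hnN) hK.le)
  have short (h : (N : ℝ) - n ≤ Q) : ((N : ℝ) - n) / 2 - D * ((N - n) / K)
      - {i ∈ Finset.Ico n N | P i}.card - Q ≤ ∑ i ∈ Finset.Ico n N, f i := by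
    have := Nat.cast_nonneg (α := ℝ) {i ∈ Finset.Ico n N | P i}.card
    linarith
  rcases hn.eq_or_lt with rfl | hlt
  · exact short (by simpa using hQ)
  by_cases hP : P n
  · have rest := ih (N - (n + 1)) (by omega) (n := n + 1) hlt rfl
    rw [← Finset.insert_Ico_add_one_left_eq_Ico hlt, Finset.sum_insert (by simp),
      Finset.filter_insert, if_pos hP, Finset.card_insert_of_notMem (by simp)]
    have : D * ((N - (n + 1)) / K) ≤ D * ((N - n) / K) := by gcongr; linarith
    push_cast at rest ⊢
    linarith [hf n]
  · obtain ⟨q, hKq, hqQ, hq⟩ := hblock n hP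
    by_cases hqN : n + q ≤ N
    · have hq0 : 0 < q := by exact_mod_cast hK.trans_le hKq
      have rest := ih (N - (n + q)) (by omega) hqN rfl
      have card_le : ({i ∈ Finset.Ico (n + q) N | P i}.card : ℝ)
          ≤ {i ∈ Finset.Ico n N | P i}.card :=
        mod_cast Finset.card_le_card (Finset.filter_subset_filter _
          (Finset.Ico_subset_Ico_left (Nat.le_add_right n q)))
      have block_cost : D ≤ D * (q / K) := le_mul_of_one_le_right hD ((one_le_div hK).2 hKq)
      have split_cost : D * ((N - (n + q)) / K) = D * ((N - n) / K) - D * (q / K) := by ring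
      rw [← Finset.sum_Ico_consecutive f (Nat.le_add_right n q) hqN,
        Finset.sum_Ico_eq_sum_range f n (n + q), Nat.add_sub_cancel_left]
      push_cast at rest
      linarith [hq hqN]
    · have : (N : ℝ) < n + q := by exact_mod_cast not_le.1 hqN
      exact short (by linarith)

lemma card_filter_abs_sub_le {s : ℕ → ℝ} {N : ℕ} {κ ε : ℝ} (hκ : 0 < κ) (hε : 0 ≤ ε)
    (hs : ∀ n, n + 1 < N → κ ≤ s n - s (n + 1)) (v : ℝ) :
    ({n ∈ Finset.range N | |s n - v| ≤ ε}.card : ℝ) ≤ 2 * ε / κ + 1 := by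
  set S := {n ∈ Finset.range N | |s n - v| ≤ ε}
  rcases S.eq_empty_or_nonempty with hempty | hne
  · rw [hempty, Finset.card_empty, Nat.cast_zero]
    positivity
  obtain ⟨d, hd⟩ := Nat.exists_eq_add_of_le (S.min'_le _ (S.max'_mem hne))
  have card_le : S.card ≤ d + 1 := by
    have hsub : S ⊆ Finset.Icc (S.min' hne) (S.max' hne) := fun n hn =>
      Finset.mem_Icc.2 ⟨S.min'_le _ hn, S.le_max' _ hn⟩
    have := Finset.card_le_card hsub
    rw [Nat.card_Icc] at this
    omega
  have hmin := Finset.mem_filter.1 (S.min'_mem hne)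
  have hmax := Finset.mem_filter.1 (S.max'_mem hne)
  have drop := mul_le_sub_of_forall_le_sub hs (hd ▸ Finset.mem_range.1 hmax.1)
  rw [← hd] at drop
  have hdκ : (d : ℝ) ≤ 2 * ε / κ := by
    rw [le_div_iff₀ hκ]
    linarith [(abs_le.1 hmin.2).2, (abs_le.1 hmax.2).1]
  calc (S.card : ℝ) ≤ d + 1 := mod_cast card_le
    _ ≤ 2 * ε / κ + 1 := by gcongr

/-- The major arcs of the circle method: the real numbers within `1 / Q` of a rational number with
denominator at most `K`. -/
def majorArcs (K Q : ℝ) : Set ℝ := {ξ | ∃ r : ℚ, r.den ≤ K ∧ |ξ - r| ≤ 1 / Q}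

lemma exists_rat_of_notMem_majorArcs {K Q ξ : ℝ} (hQ : 1 ≤ Q) (hξ : ξ ∉ majorArcs K Q) :
    ∃ r : ℚ, |ξ - r| ≤ 1 / (Q * r.den) ∧ K ≤ r.den ∧ r.den ≤ Q := by
  obtain ⟨r, hr, hrQ⟩ := exists_rat_abs_sub_le_div_den hQ ξ
  refine ⟨r, hr, le_of_not_ge fun hrK => hξ ⟨r, hrK, hr.trans ?_⟩, hrQ⟩
  exact one_div_le_one_div_of_le (by positivity)
    (le_mul_of_one_le_right (by positivity) (mod_cast r.den_pos))

lemma abs_num_le_of_abs_sub_le {K B ξ : ℝ} {r : ℚ} (hrK : r.den ≤ K) (hξ : |ξ| ≤ B)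
    (hr : |ξ - r| ≤ 1) : |(r.num : ℝ)| ≤ K * (B + 1) := by
  have abs_r : |(r : ℝ)| ≤ B + 1 := by
    have := abs_sub_abs_le_abs_sub (r : ℝ) ξ
    rw [abs_sub_comm] at this
    linarith
  have num_eq : (r.num : ℝ) = r.den * r := by
    rw [mul_comm]
    exact_mod_cast (Rat.mul_den_eq_num r).symm
  have : 0 ≤ K := r.den.cast_nonneg.trans hrK
  rw [num_eq, abs_mul, Nat.abs_cast]
  gcongr

open Classical in
lemma card_filter_mem_majorArcs_le {s : ℕ → ℝ} {N : ℕ} {κ B K Q : ℝ} (hκ : 0 < κ) (hB : 0 ≤ B)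
    (hK : 0 ≤ K) (hQ : 1 ≤ Q) (hs : ∀ n, n + 1 < N → κ ≤ s n - s (n + 1))
    (hsB : ∀ n < N, |s n| ≤ B) :
    ({n ∈ Finset.range N | s n ∈ majorArcs K Q}.card : ℝ)
      ≤ (2 * (K * (B + 1)) + 1) * K * (2 * (1 / Q) / κ + 1) := by
  set M : ℤ := ⌊K * (B + 1)⌋
  set centres : Finset (ℤ × ℕ) := Finset.Icc (-M) M ×ˢ Finset.Icc 1 ⌊K⌋₊ with hcentres
  have cover : {n ∈ Finset.range N | s n ∈ majorArcs K Q} ⊆ centres.biUnion fun c =>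
      {n ∈ Finset.range N | |s n - (c.1 : ℝ) / (c.2 : ℝ)| ≤ 1 / Q} := by
    intro n hn
    obtain ⟨hnN, r, hrK, hr⟩ := Finset.mem_filter.1 hn
    have hnum := abs_le.1 <| abs_num_le_of_abs_sub_le hrK (hsB n (Finset.mem_range.1 hnN))
      (hr.trans (div_le_one_of_le₀ hQ (by linarith)))
    have hnumM : r.num ≤ M := Int.le_floor.2 hnum.2
    have hnegM : -r.num ≤ M := Int.le_floor.2 (by push_cast; linarith)
    refine Finset.mem_biUnion.2 ⟨(r.num, r.den), ?_, Finset.mem_filter.2 ⟨hnN, ?_⟩⟩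
    · rw [hcentres, Finset.mem_product, Finset.mem_Icc, Finset.mem_Icc]
      exact ⟨⟨by linarith, hnumM⟩, r.den_pos, Nat.le_floor hrK⟩
    · rwa [← Rat.cast_def]
  have card_centres : (centres.card : ℝ) ≤ (2 * (K * (B + 1)) + 1) * K := by
    have hM : 0 ≤ M := Int.floor_nonneg.2 (by positivity)
    have card_num : ((Finset.Icc (-M) M).card : ℝ) = 2 * M + 1 := by
      rw [← Int.cast_natCast, Int.card_Icc_of_le _ _ (by linarith)]
      push_cast
      ring
    rw [hcentres, Finset.card_product, Nat.card_Icc, Nat.add_sub_cancel, Nat.cast_mul, card_num]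
    gcongr
    · exact Int.floor_le _
    · exact Nat.floor_le hK
  calc ({n ∈ Finset.range N | s n ∈ majorArcs K Q}.card : ℝ)
      ≤ ∑ c ∈ centres, ({n ∈ Finset.range N | |s n - (c.1 : ℝ) / (c.2 : ℝ)| ≤ 1 / Q}.card : ℝ) :=
        (Nat.cast_le.2 ((Finset.card_le_card cover).trans Finset.card_biUnion_le)).trans_eq
          (Nat.cast_sum _ _)
    _ ≤ centres.card • (2 * (1 / Q) / κ + 1) := Finset.sum_le_card_nsmul _ _ _ fun c _ =>
        card_filter_abs_sub_le hκ (by positivity) hs _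
    _ ≤ _ := by
        rw [nsmul_eq_mul]
        gcongr

lemma half_le_sum_fract_of_fwdDiff {g : ℕ → ℝ} {N : ℕ} {κ μ B K Q : ℝ} (hκ : 0 < κ) (hμ : 0 ≤ μ)
    (hB : 0 ≤ B) (hK : 0 < K) (hQ : 1 ≤ Q)
    (hg : ∀ n, n + 1 < N → Δ_[1] g n - Δ_[1] g (n + 1) ∈ Set.Icc κ μ)
    (hgB : ∀ n < N, |Δ_[1] g n| ≤ B) :
    (N : ℝ) / 2 - (5 / 2 + 2 * μ * Q ^ 3) * (N / K)
      - (2 * (K * (B + 1)) + 1) * K * (2 * (1 / Q) / κ + 1) - Q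
      ≤ ∑ i ∈ Finset.range N, Int.fract (g i) := by
  classical
  have hQ0 : 0 ≤ Q := by linarith
  have blocks := half_le_sum_Ico_of_exists_block (f := fun i => Int.fract (g i)) (N := N)
    (P := fun n => Δ_[1] g n ∈ majorArcs K Q) (D := 5 / 2 + 2 * μ * Q ^ 3) hK hQ0
    (by positivity) (fun _ => Int.fract_nonneg _) (fun n hn => by
      obtain ⟨r, hr, hKr, hrQ⟩ := exists_rat_of_notMem_majorArcs hQ hn
      exact ⟨r.den, hKr, hrQ, half_le_sum_fract_block hμ hQ
        (fun i hi => ⟨hκ.le.trans (hg i hi).1, (hg i hi).2⟩) hr hrQ⟩) N.zero_le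
  have major := card_filter_mem_majorArcs_le hκ hB hK.le hQ (fun n hn => (hg n hn).1) hgB
  rw [← Finset.range_eq_Ico, Nat.cast_zero, sub_zero] at blocks
  linarith

/-! ### Lattice points in an ellipse -/

/-- The height over `x` of the upper half of the circle of radius `r` centred at the origin; outside
`[-r, r]` it takes the junk value `0`. -/
def semicircle (r x : ℝ) : ℝ := √(r ^ 2 - x ^ 2)

lemma continuous_semicircle (r : ℝ) : Continuous (semicircle r) := by
  unfold semicircle
  fun_prop

lemma semicircle_nonneg (r x : ℝ) : 0 ≤ semicircle r x := Real.sqrt_nonneg _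

lemma semicircle_sq {r x : ℝ} (hx : x ∈ Set.Icc (-r) r) : semicircle r x ^ 2 = r ^ 2 - x ^ 2 :=
  Real.sq_sqrt (sub_nonneg.2 (sq_le_sq' hx.1 hx.2))

lemma semicircle_le {r : ℝ} (hr : 0 ≤ r) (x : ℝ) : semicircle r x ≤ r :=
  Real.sqrt_le_iff.2 ⟨hr, sub_le_self _ (sq_nonneg x)⟩

lemma antitoneOn_semicircle (r : ℝ) : AntitoneOn (semicircle r) (Set.Ici 0) := by
  intro x hx y _ hxy
  have : 0 ≤ x := hx
  unfold semicircle
  gcongr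

lemma semicircle_sub_le_div {r η x : ℝ} (hη : 0 < η) (hx : 0 ≤ x) (hxr : x + 1 ≤ r)
    (hηx : η ≤ semicircle r (x + 1)) :
    semicircle r x - semicircle r (x + 1) ≤ r / η := by
  have hu := semicircle_sq (r := r) (x := x) ⟨by linarith, by linarith⟩
  have hv := semicircle_sq (r := r) (x := x + 1) ⟨by linarith, hxr⟩
  have hvu := antitoneOn_semicircle r hx (by linarith : 0 ≤ x + 1) (by linarith)
  rw [le_div_iff₀ hη]
  calc (semicircle r x - semicircle r (x + 1)) * η
      ≤ (semicircle r x - semicircle r (x + 1)) *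
          ((semicircle r x + semicircle r (x + 1)) / 2) := by
        gcongr
        linarith
    _ = x + 1 / 2 := by linear_combination (hu - hv) / 2
    _ ≤ r := by linarith

lemma semicircle_second_diff_mem_Icc {r η x : ℝ} (hη : 0 < η) (hx : 0 ≤ x) (hxr : x + 2 ≤ r)
    (hηx : η ≤ semicircle r (x + 2)) :
    2 * semicircle r (x + 1) - semicircle r x - semicircle r (x + 2)
      ∈ Set.Icc (1 / r) (2 * r ^ 2 / η ^ 3) := by
  have hr : 0 < r := by linarith
  have anti := antitoneOn_semicircle r
  have hvu := anti hx (by linarith : 0 ≤ x + 1) (by linarith)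
  have hzv := anti (by linarith : 0 ≤ x + 1) (by linarith : 0 ≤ x + 2) (by linarith)
  have vz_le : semicircle r (x + 1) - semicircle r (x + 2) ≤ r / η := by
    have := semicircle_sub_le_div (r := r) (x := x + 1) hη (by linarith) (by linarith)
      (by rwa [show x + 1 + 1 = x + 2 by ring])
    rwa [show x + 1 + 1 = x + 2 by ring] at this
  have uv_le := semicircle_sub_le_div hη hx (by linarith) (hηx.trans hzv)
  have hu := semicircle_sq (r := r) (x := x) ⟨by linarith, by linarith⟩
  have hv := semicircle_sq (r := r) (x := x + 1) ⟨by linarith, by linarith⟩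
  have hz := semicircle_sq (r := r) (x := x + 2) ⟨by linarith, by linarith⟩
  have hur := semicircle_le hr.le x
  set u := semicircle r x
  set v := semicircle r (x + 1)
  set z := semicircle r (x + 2)
  have second_diff_eq : 2 * v - u - z = (2 + (v - z) * (u - z)) / (u + v) := by
    rw [eq_div_iff (by linarith)]
    linear_combination 2 * hv - hu - hz
  have prod_nonneg : 0 ≤ (v - z) * (u - z) := mul_nonneg (by linarith) (by linarith)
  rw [second_diff_eq]
  constructor
  · calc 1 / r = (2 + 0) / (r + r) := by field_simp; norm_num
      _ ≤ (2 + (v - z) * (u - z)) / (u + v) := by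
        gcongr <;> linarith
  · have hηr : 1 ≤ r / η := (one_le_div hη).2 (by linarith)
    have : 1 ≤ (r / η) ^ 2 := one_le_pow₀ hηr
    calc (2 + (v - z) * (u - z)) / (u + v)
        ≤ (2 * (r / η) ^ 2 + (r / η) * (2 * (r / η))) / (η + η) := by
          gcongr <;> linarith
      _ = 2 * r ^ 2 / η ^ 3 := by field_simp

lemma half_le_sum_fract_mul_semicircle {c r η K Q : ℝ} {N : ℕ} (hc : 0 < c) (hη : 0 < η)
    (hN : N ≤ r) (hηN : η ≤ semicircle r N) (hK : 0 < K) (hQ : 1 ≤ Q) :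
    (N : ℝ) / 2 - (5 / 2 + 2 * (c * (2 * r ^ 2 / η ^ 3)) * Q ^ 3) * (N / K)
      - (2 * (K * (c * (r / η) + 1)) + 1) * K * (2 * (1 / Q) / (c * (1 / r)) + 1) - Q
      ≤ ∑ n ∈ Finset.range N, Int.fract (c * semicircle r n) := by
  have hr : 0 < r := by
    rcases hN.lt_or_eq with h | h
    · exact N.cast_nonneg.trans_lt h
    · rw [← h, semicircle, sub_self, Real.sqrt_zero] at hηN
      linarith
  have η_le : ∀ n : ℕ, n ≤ N → η ≤ semicircle r n := fun n hn =>
    hηN.trans (antitoneOn_semicircle r (Set.mem_Ici.2 n.cast_nonneg)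
      (Set.mem_Ici.2 N.cast_nonneg) (mod_cast hn))
  have le_r : ∀ n : ℕ, n ≤ N → (n : ℝ) ≤ r := fun n hn => (Nat.cast_le.2 hn).trans hN
  refine half_le_sum_fract_of_fwdDiff (by positivity) (by positivity) (by positivity) hK hQ
    (fun n hn => ?_) (fun n hn => ?_)
  · have hle := le_r (n + 2) hn
    have hηn := η_le (n + 2) hn
    push_cast at hle hηn
    obtain ⟨lower, upper⟩ := semicircle_second_diff_mem_Icc hη n.cast_nonneg hle hηn
    have slopes : Δ_[1] (fun n : ℕ => c * semicircle r n) n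
        - Δ_[1] (fun n : ℕ => c * semicircle r n) (n + 1)
        = c * (2 * semicircle r (n + 1) - semicircle r n - semicircle r (n + 2)) := by
      simp only [fwdDiff]
      push_cast
      rw [show (n : ℝ) + 1 + 1 = n + 2 by ring]
      ring
    rw [slopes]
    exact ⟨by gcongr, by gcongr⟩
  · have hle := le_r (n + 1) hn
    have hηn := η_le (n + 1) hn
    push_cast at hle hηn
    have drop_nonneg := sub_nonneg.2 <| antitoneOn_semicircle r
      (Set.mem_Ici.2 n.cast_nonneg) (Set.mem_Ici.2 (by positivity)) (lt_add_one (n : ℝ)).le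
    have slope : Δ_[1] (fun n : ℕ => c * semicircle r n) n
        = -(c * (semicircle r n - semicircle r (n + 1))) := by
      simp only [fwdDiff]
      push_cast
      ring
    rw [slope, abs_neg, abs_of_nonneg (mul_nonneg hc.le drop_nonneg)]
    gcongr
    exact semicircle_sub_le_div hη n.cast_nonneg hle hηn

lemma sum_range_fract_le {M N : ℕ} (hNM : N ≤ M) (f : ℕ → ℝ) :
    ∑ n ∈ Finset.range N, Int.fract (f n) ≤ 1 + ∑ n ∈ Finset.Icc 1 M, Int.fract (f n) := by
  have subset : Finset.range N ⊆ insert 0 (Finset.Icc 1 M) := by grind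
  refine (Finset.sum_le_sum_of_subset_of_nonneg subset fun i _ _ => Int.fract_nonneg _).trans ?_
  rw [Finset.sum_insert (by simp)]
  gcongr
  exact (Int.fract_lt_one _).le

-- The parameters below, `r = T ^ 24`, `K = T ^ 2`, `Q = T ^ 7` and `N = r - T ^ 22`, are chosen so
-- that each of the error terms of `half_le_sum_fract_mul_semicircle` is `O(T ^ 22)`; this is where
-- the exponent `22 / 24 = 11 / 12` comes from.
lemma half_pow_le_sum_fract_mul_semicircle {c T : ℝ} (hc : 0 < c) (hT : 1 ≤ T) :
    T ^ 24 / 2 - (6 * (c + 1 / c) + 13) * T ^ 22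
      ≤ ∑ n ∈ Finset.Icc 1 ⌊T ^ 24⌋₊, Int.fract (c * semicircle (T ^ 24) n) := by
  have hT0 : 0 < T := by linarith
  have pow_le : T ^ 22 ≤ T ^ 24 := pow_le_pow_right₀ hT (by norm_num)
  set N := ⌊T ^ 24 - T ^ 22⌋₊
  have hN : (N : ℝ) ≤ T ^ 24 - T ^ 22 := Nat.floor_le (by linarith)
  have hN' : T ^ 24 - T ^ 22 < N + 1 := Nat.lt_floor_add_one _
  have hηN : T ^ 23 ≤ semicircle (T ^ 24) N := by
    refine Real.le_sqrt_of_sq_le ?_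
    have : (N : ℝ) ^ 2 ≤ (T ^ 24 - T ^ 22) ^ 2 := by gcongr
    have : T ^ 44 ≤ T ^ 46 := pow_le_pow_right₀ hT (by norm_num)
    linarith
  have main := half_le_sum_fract_mul_semicircle (N := N) (r := T ^ 24) (K := T ^ 2) (Q := T ^ 7) hc
    (by positivity) (by linarith [pow_pos hT0 22]) hηN (by positivity) (one_le_pow₀ hT)
  have minor_arcs : (5 / 2 + 2 * (c * (2 * (T ^ 24) ^ 2 / (T ^ 23) ^ 3)) * (T ^ 7) ^ 3)
      * (N / T ^ 2) ≤ (5 / 2 + 4 * c) * T ^ 22 := by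
    calc _ = (5 / 2 + 4 * c) * (N / T ^ 2) := by field_simp; ring
      _ ≤ (5 / 2 + 4 * c) * (T ^ 24 / T ^ 2) := by gcongr; linarith [pow_pos hT0 22]
      _ = (5 / 2 + 4 * c) * T ^ 22 := by field_simp
  have major_arcs : (2 * (T ^ 2 * (c * (T ^ 24 / T ^ 23) + 1)) + 1) * T ^ 2
      * (2 * (1 / T ^ 7) / (c * (1 / T ^ 24)) + 1) ≤ (7 + 2 * c + 6 / c) * T ^ 22 := by
    calc _ = (2 * c * T ^ 3 + 2 * T ^ 2 + 1) * T ^ 2 * (2 / c * T ^ 17 + 1) := by field_simp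
      _ ≤ (2 * c * T ^ 3 + 2 * T ^ 3 + T ^ 3) * T ^ 2 * (2 / c * T ^ 17 + T ^ 17) := by
        gcongr
        · norm_num
        · exact one_le_pow₀ hT
        · exact one_le_pow₀ hT
      _ = (7 + 2 * c + 6 / c) * T ^ 22 := by field_simp; ring
  have extend := sum_range_fract_le (Nat.floor_le_floor (by linarith [pow_pos hT0 22]) :
    N ≤ ⌊T ^ 24⌋₊) fun n => c * semicircle (T ^ 24) n
  have hT7 : T ^ 7 ≤ T ^ 22 := pow_le_pow_right₀ hT (by norm_num)
  have : 1 ≤ T ^ 22 := one_le_pow₀ hT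
  rw [show 6 * (c + 1 / c) + 13 = 6 * c + 6 / c + 13 by ring]
  linarith

lemma half_sub_rpow_le_sum_fract_mul_semicircle {c r : ℝ} (hc : 0 < c) (hr : 1 ≤ r) :
    r / 2 - (6 * (c + 1 / c) + 13) * r ^ (11 / 12 : ℝ)
      ≤ ∑ n ∈ Finset.Icc 1 ⌊r⌋₊, Int.fract (c * semicircle r n) := by
  have main := half_pow_le_sum_fract_mul_semicircle hc
    (Real.one_le_rpow (z := (1 / 24 : ℝ)) hr (by norm_num))
  have hr0 : 0 ≤ r := by linarith
  have pow24 : (r ^ (1 / 24 : ℝ)) ^ 24 = r := by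
    rw [← Real.rpow_mul_natCast hr0]
    norm_num
  have pow22 : (r ^ (1 / 24 : ℝ)) ^ 22 = r ^ (11 / 12 : ℝ) := by
    rw [← Real.rpow_mul_natCast hr0]
    norm_num
  rwa [pow24, pow22] at main

lemma concaveOn_semicircle (r : ℝ) : ConcaveOn ℝ (Set.Icc (-r) r) (semicircle r) := by
  have parabola : ConcaveOn ℝ Set.univ fun x : ℝ => r ^ 2 - x ^ 2 :=
    (concaveOn_const _ convex_univ).sub (even_two.convexOn_pow)
  refine ⟨convex_Icc _ _, fun x hx y hy s t hs ht hst => ?_⟩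
  exact (Real.strictConcaveOn_sqrt.concaveOn.2 (sub_nonneg.2 (sq_le_sq' hx.1 hx.2))
    (sub_nonneg.2 (sq_le_sq' hy.1 hy.2)) hs ht hst).trans
    (Real.sqrt_le_sqrt (parabola.2 trivial trivial hs ht hst))

lemma integral_neg_self_eq_integral_add_comp_neg {E : Type*} [NormedAddCommGroup E]
    [NormedSpace ℝ E] {f : ℝ → E} {L : ℝ} (hf : IntervalIntegrable f volume (-L) L) :
    ∫ x in -L..L, f x = ∫ x in 0..L, (f x + f (-x)) := by
  have zero_mem : (0 : ℝ) ∈ Set.uIcc (-L) L := by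
    rw [Set.mem_uIcc]
    rcases le_total 0 L with h | h
    · exact .inl ⟨neg_nonpos.2 h, h⟩
    · exact .inr ⟨h, neg_nonneg.2 h⟩
  have left : IntervalIntegrable f volume (-L) 0 :=
    hf.mono_set (Set.uIcc_subset_uIcc_left zero_mem)
  have right : IntervalIntegrable f volume 0 L := hf.mono_set (Set.uIcc_subset_uIcc_right zero_mem)
  have reflected : IntervalIntegrable (fun x => f (-x)) volume 0 L := by
    simpa using ((IntervalIntegrable.iff_comp_neg (f := f)).1 left).symm
  rw [← intervalIntegral.integral_add_adjacent_intervals left right,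
    intervalIntegral.integral_add right reflected, intervalIntegral.integral_comp_neg, neg_zero,
    add_comm]

lemma integral_semicircle {r : ℝ} (hr : 0 ≤ r) :
    ∫ x in 0..r, semicircle r x = π * r ^ 2 / 4 := by
  have unit : ∫ x in (0 : ℝ)..1, √(1 - x ^ 2) = π / 4 := by
    have := integral_neg_self_eq_integral_add_comp_neg (f := fun x => √(1 - x ^ 2)) (L := 1)
      (Continuous.intervalIntegrable (by fun_prop) _ _)
    simp only [neg_sq, ← two_mul, intervalIntegral.integral_const_mul] at this
    rw [integral_sqrt_one_sub_sq] at this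
    linarith
  have scale : ∀ x, semicircle r (x * r) = r * √(1 - x ^ 2) := fun x => by
    rw [semicircle, show r ^ 2 - (x * r) ^ 2 = r ^ 2 * (1 - x ^ 2) by ring,
      Real.sqrt_mul (sq_nonneg r), Real.sqrt_sq hr]
  have := intervalIntegral.mul_integral_comp_mul_right (a := 0) (b := 1) (f := semicircle r) r
  rw [zero_mul, one_mul] at this
  rw [← this]
  simp only [scale, intervalIntegral.integral_const_mul, unit]
  ring

lemma half_add_le_integral_of_concaveOn {f : ℝ → ℝ} {x : ℝ} (hf : Continuous f)
    (hconc : ConcaveOn ℝ (Set.Icc x (x + 1)) f) :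
    (f x + f (x + 1)) / 2 ≤ ∫ y in x..x + 1, f y := by
  calc (f x + f (x + 1)) / 2 = ∫ t in (0 : ℝ)..1, (f x + t * (f (x + 1) - f x)) := by
        rw [intervalIntegral.integral_add (by simp)
          (Continuous.intervalIntegrable (by fun_prop) _ _), intervalIntegral.integral_mul_const,
          integral_id, intervalIntegral.integral_const]
        simp only [smul_eq_mul]
        ring
    _ ≤ ∫ t in (0 : ℝ)..1, f (x + t) := by
        refine intervalIntegral.integral_mono_on zero_le_one
          (Continuous.intervalIntegrable (by fun_prop) _ _)
          (Continuous.intervalIntegrable (by fun_prop) _ _) fun t ht => ?_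
        have := hconc.2 (x := x) (y := x + 1) (by simp) (by simp) (sub_nonneg.2 ht.2) ht.1 (by ring)
        simp only [smul_eq_mul] at this
        rw [show (1 - t) * x + t * (x + 1) = x + t by ring] at this
        linarith
    _ = ∫ y in x..x + 1, f y := by
        rw [intervalIntegral.integral_comp_add_left f x, add_zero]

lemma trapezoid_sum_le_integral_of_concaveOn {f : ℝ → ℝ} {m : ℕ} (hf : Continuous f)
    (hconc : ConcaveOn ℝ (Set.Icc 0 (m : ℝ)) f) :
    f 0 / 2 + ∑ n ∈ Finset.Icc 1 m, f n - f m / 2 ≤ ∫ x in 0..m, f x := by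
  induction m with
  | zero => simp
  | succ m ih =>
    push_cast at hconc ⊢
    have head := ih (hconc.subset (Set.Icc_subset_Icc_right (by simp)) (convex_Icc _ _))
    have last := half_add_le_integral_of_concaveOn hf
      (hconc.subset (Set.Icc_subset_Icc_left m.cast_nonneg) (convex_Icc _ _))
    rw [Finset.sum_Icc_succ_top (by omega), ← intervalIntegral.integral_add_adjacent_intervals
      (hf.intervalIntegrable 0 m) (hf.intervalIntegrable _ _)]
    push_cast
    linarith

lemma sum_semicircle_le {r : ℝ} (hr : 0 ≤ r) :
    ∑ n ∈ Finset.Icc 1 ⌊r⌋₊, semicircle r n ≤ π * r ^ 2 / 4 - r / 2 + √(2 * r) / 2 := by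
  have floor_le : (⌊r⌋₊ : ℝ) ≤ r := Nat.floor_le hr
  have trapezoid := trapezoid_sum_le_integral_of_concaveOn (continuous_semicircle r)
    ((concaveOn_semicircle r).subset (Set.Icc_subset_Icc (neg_nonpos.2 hr) floor_le)
      (convex_Icc 0 _))
  have integral_le : ∫ x in 0..(⌊r⌋₊ : ℝ), semicircle r x ≤ π * r ^ 2 / 4 := by
    rw [← integral_semicircle hr]
    exact intervalIntegral.integral_mono_interval le_rfl (Nat.cast_nonneg _) floor_le
      (Eventually.of_forall fun x => semicircle_nonneg r x)
      ((continuous_semicircle r).intervalIntegrable _ _)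
  have left_end : semicircle r 0 = r := by simp [semicircle, Real.sqrt_sq hr]
  have right_end : semicircle r ⌊r⌋₊ ≤ √(2 * r) := by
    refine Real.sqrt_le_sqrt ?_
    nlinarith [Nat.lt_floor_add_one r, Nat.cast_nonneg (α := ℝ) ⌊r⌋₊]
  linarith

/-- The pairs of positive integers in the ellipse `(x / L)² + (y / H)² ≤ R²`. -/
def ellipsePts (L H R : ℝ) : Finset (ℕ × ℕ) :=
  {p ∈ Finset.Icc 1 ⌊L * R⌋₊ ×ˢ Finset.Icc 1 ⌊H * R⌋₊ |
    ((p.1 : ℝ) / L) ^ 2 + ((p.2 : ℝ) / H) ^ 2 ≤ R ^ 2}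

lemma mem_ellipsePts {L H R : ℝ} (hL : 0 < L) (hH : 0 < H) (hR : 0 ≤ R) {p : ℕ × ℕ} :
    p ∈ ellipsePts L H R ↔
      0 < p.1 ∧ 0 < p.2 ∧ ((p.1 : ℝ) / L) ^ 2 + ((p.2 : ℝ) / H) ^ 2 ≤ R ^ 2 := by
  have le_floor {m : ℕ} {b : ℝ} (hb : 0 < b) (h : ((m : ℝ) / b) ^ 2 ≤ R ^ 2) : m ≤ ⌊b * R⌋₊ :=
    Nat.le_floor ((div_le_iff₀' hb).1 (le_of_sq_le_sq h hR))
  simp only [ellipsePts, Finset.mem_filter, Finset.mem_product, Finset.mem_Icc]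
  refine ⟨fun h => ⟨h.1.1.1, h.1.2.1, h.2⟩, fun ⟨h₁, h₂, h⟩ => ⟨⟨⟨h₁, ?_⟩, h₂, ?_⟩, h⟩⟩
  · exact le_floor hL (by nlinarith [sq_nonneg ((p.2 : ℝ) / H)])
  · exact le_floor hH (by nlinarith [sq_nonneg ((p.1 : ℝ) / L)])

lemma ellipsePts_eq_empty {L R : ℝ} (H : ℝ) (hLR : L * R < 1) : ellipsePts L H R = ∅ := by
  rw [ellipsePts, Nat.floor_eq_zero.2 hLR]
  simp

lemma card_ellipsePts_le_sum_floor {L H : ℝ} (hL : 0 < L) (hH : 0 < H) (R : ℝ) :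
    (ellipsePts L H R).card
      ≤ ∑ m ∈ Finset.Icc 1 ⌊L * R⌋₊, ⌊H / L * semicircle (L * R) m⌋₊ := by
  simp only [ellipsePts, Finset.card_filter, Finset.sum_product]
  refine Finset.sum_le_sum fun m _ => ?_
  rw [← Finset.card_filter]
  refine (Finset.card_le_card (t := Finset.Icc 1 ⌊H / L * semicircle (L * R) m⌋₊)
    fun n hn => ?_).trans_eq (by simp)
  obtain ⟨hn_mem, hmn⟩ := Finset.mem_filter.1 hn
  refine Finset.mem_Icc.2 ⟨(Finset.mem_Icc.1 hn_mem).1, Nat.le_floor ?_⟩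
  have below : (n : ℝ) / (H / L) ≤ semicircle (L * R) m := by
    refine Real.le_sqrt_of_sq_le ?_
    calc ((n : ℝ) / (H / L)) ^ 2
        = L ^ 2 * (((m : ℝ) / L) ^ 2 + ((n : ℝ) / H) ^ 2) - m ^ 2 := by field_simp; ring
      _ ≤ L ^ 2 * R ^ 2 - m ^ 2 := by gcongr
      _ = (L * R) ^ 2 - m ^ 2 := by ring
  exact (div_le_iff₀' (by positivity)).1 below

lemma card_ellipsePts_le_sub_sum_fract {L H : ℝ} (hL : 0 < L) (hH : 0 < H) (R : ℝ) :
    ((ellipsePts L H R).card : ℝ)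
      ≤ H / L * ∑ m ∈ Finset.Icc 1 ⌊L * R⌋₊, semicircle (L * R) m
        - ∑ m ∈ Finset.Icc 1 ⌊L * R⌋₊, Int.fract (H / L * semicircle (L * R) m) := by
  refine (Nat.cast_le.2 (card_ellipsePts_le_sum_floor hL hH R)).trans_eq ?_
  rw [Nat.cast_sum, Finset.mul_sum, ← Finset.sum_sub_distrib]
  exact Finset.sum_congr rfl fun m _ => by
    rw [Int.self_sub_fract, natCast_floor_eq_intCast_floor
      (mul_nonneg (by positivity) (semicircle_nonneg _ _))]

lemma sqrt_two_mul_div_two_le_rpow {r : ℝ} (hr : 1 ≤ r) : √(2 * r) / 2 ≤ r ^ (11 / 12 : ℝ) := by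
  calc √(2 * r) / 2 ≤ √(2 ^ 2 * r) / 2 := by gcongr; norm_num
    _ = r ^ (1 / 2 : ℝ) := by
      rw [Real.sqrt_mul (by norm_num), Real.sqrt_sq (by norm_num), Real.sqrt_eq_rpow]
      ring
    _ ≤ r ^ (11 / 12 : ℝ) := Real.rpow_le_rpow_of_exponent_le hr (by norm_num)

lemma card_ellipsePts_le {L H R : ℝ} (hL : 0 < L) (hH : 0 < H) (hR : 0 ≤ R) :
    ((ellipsePts L H R).card : ℝ) ≤ π * (L * H) * R ^ 2 / 4 - (L + H) * R / 2
      + (7 * (H / L + 1 / (H / L)) + 13) * (L * R) ^ (11 / 12 : ℝ) := by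
  have hLR : 0 ≤ L * R := by positivity
  have hc : 0 < H / L := by positivity
  have H_eq : H = H / L * L := by field_simp
  have hcard := card_ellipsePts_le_sub_sum_fract hL hH R
  have eq_empty := ellipsePts_eq_empty (L := L) (R := R) H
  set c := H / L
  set r := L * R
  rw [show π * (L * H) * R ^ 2 / 4 - (L + H) * R / 2
    = c * (π * r ^ 2 / 4 - r / 2) - r / 2 by rw [H_eq]; ring]
  rcases lt_or_ge r 1 with hr | hr
  · have r_le : r ≤ r ^ (11 / 12 : ℝ) :=
      Real.self_le_rpow_of_le_one hLR hr.le (by norm_num)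
    calc ((ellipsePts L H R).card : ℝ) ≤ c * (π * r ^ 2 / 4) + (7 / c) * r := by
          rw [eq_empty hr, Finset.card_empty, Nat.cast_zero]
          positivity
      _ ≤ c * (π * r ^ 2 / 4 - r / 2) - r / 2 + (7 * (c + 1 / c) + 13) * r := by
          have : 0 ≤ c * r := by positivity
          rw [show 7 / c = 7 * (1 / c) by ring]
          linarith
      _ ≤ _ := by gcongr
  calc ((ellipsePts L H R).card : ℝ)
      ≤ c * ∑ m ∈ Finset.Icc 1 ⌊r⌋₊, semicircle r m
          - ∑ m ∈ Finset.Icc 1 ⌊r⌋₊, Int.fract (c * semicircle r m) := hcard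
    _ ≤ c * (π * r ^ 2 / 4 - r / 2 + r ^ (11 / 12 : ℝ))
          - (r / 2 - (6 * (c + 1 / c) + 13) * r ^ (11 / 12 : ℝ)) := by
        gcongr
        · exact (sum_semicircle_le hLR).trans
            (by gcongr; exact sqrt_two_mul_div_two_le_rpow hr)
        · exact half_sub_rpow_le_sum_fract_mul_semicircle hc hr
    _ ≤ _ := by
        have : 0 ≤ 1 / c * r ^ (11 / 12 : ℝ) := by positivity
        linarith

/-! ### Parseval's identity on a rectangle -/

lemma fourierCoeffOn_of_odd {f : ℝ → ℝ} (hodd : f.Odd) {L : ℝ} (hL : 0 < L)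
    (hf : IntervalIntegrable f volume (-L) L) (n : ℤ) :
    fourierCoeffOn (neg_lt_self hL) (fun x => (f x : ℂ)) n
      = ((-(∫ x in 0..L, f x * sin (n * π / L * x)) / L : ℝ) : ℂ) * Complex.I := by
  have character : ∀ x : ℝ, fourier (-n) (x : AddCircle (L - -L))
      = Complex.exp ((-(n * π / L * x) : ℝ) * Complex.I) := fun x => by
    have : (L : ℂ) ≠ 0 := mod_cast hL.ne'
    rw [fourier_coe_apply]
    congr 1
    push_cast
    field_simp
    ring
  have integrable_mul : IntervalIntegrable
      (fun x : ℝ => fourier (-n) (x : AddCircle (L - -L)) • (f x : ℂ)) volume (-L) L := by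
    simp only [character]
    exact IntervalIntegrable.continuousOn_smul ⟨hf.1.ofReal, hf.2.ofReal⟩ (by fun_prop)
  have odd_part : ∀ x : ℝ, fourier (-n) (x : AddCircle (L - -L)) • (f x : ℂ)
      + fourier (-n) ((-x : ℝ) : AddCircle (L - -L)) • (f (-x) : ℂ)
      = ((f x * sin (n * π / L * x) : ℝ) : ℂ) * (-2 * Complex.I) := fun x => by
    rw [character, character, hodd x, mul_neg, neg_neg, Complex.exp_mul_I, Complex.exp_mul_I]
    simp only [← Complex.ofReal_cos, ← Complex.ofReal_sin, Real.cos_neg, Real.sin_neg, smul_eq_mul]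
    push_cast
    ring
  rw [fourierCoeffOn_eq_integral, integral_neg_self_eq_integral_add_comp_neg integrable_mul]
  simp only [odd_part]
  rw [intervalIntegral.integral_mul_const, intervalIntegral.integral_ofReal, Complex.real_smul]
  have : (L : ℂ) ≠ 0 := mod_cast hL.ne'
  push_cast
  field_simp
  ring

lemma hasSum_sq_integral_mul_sin_of_odd {f : ℝ → ℝ} (hodd : f.Odd) (hf : Continuous f) {L : ℝ}
    (hL : 0 < L) :
    HasSum (fun m : ℕ => 2 / L * (∫ x in 0..L, f x * sin (m * π / L * x)) ^ 2)
      (∫ x in 0..L, f x ^ 2) := by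
  set S : ℤ → ℝ := fun n => ∫ x in 0..L, f x * sin (n * π / L * x) with hS
  have memLp : MemLp (fun x => (f x : ℂ)) 2 (volume.restrict (Set.Ioc (-L) L)) :=
    (memLp_two_iff_integrable_sq_norm (by fun_prop)).2
      ((Continuous.integrableOn_Icc (by fun_prop)).mono_set Set.Ioc_subset_Icc_self)
  have parseval := hasSum_sq_fourierCoeffOn (neg_lt_self hL) memLp
  have norm_sq : ∫ x in -L..L, ‖(f x : ℂ)‖ ^ 2 = 2 * ∫ x in 0..L, f x ^ 2 := by
    rw [integral_neg_self_eq_integral_add_comp_neg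
      (Continuous.intervalIntegrable (by fun_prop) _ _), ← intervalIntegral.integral_const_mul]
    simp only [Complex.norm_real, Real.norm_eq_abs, sq_abs, hodd _, neg_sq, two_mul]
  have coeff_sq : ∀ n : ℤ, ‖fourierCoeffOn (neg_lt_self hL) (fun x => (f x : ℂ)) n‖ ^ 2
      = (S n / L) ^ 2 := fun n => by
    rw [fourierCoeffOn_of_odd hodd hL (hf.intervalIntegrable _ _), norm_mul, Complex.norm_I,
      mul_one, Complex.norm_real, Real.norm_eq_abs, sq_abs, neg_div, neg_sq]
  have S_zero : S 0 = 0 := by simp [hS]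
  have S_neg : ∀ n, S (-n) = -S n := fun n => by
    simp only [hS, ← intervalIntegral.integral_neg, Int.cast_neg, neg_mul, neg_div, Real.sin_neg,
      mul_neg]
  simp only [norm_sq, coeff_sq] at parseval
  have terms : ∀ m : ℕ, 2 / L * (∫ x in 0..L, f x * sin (m * π / L * x)) ^ 2
      = L * ((S m / L) ^ 2 + (S (-m) / L) ^ 2) := fun m => by
    rw [S_neg]
    simp only [hS, Int.cast_natCast]
    field_simp
    ring
  have total : ∫ x in 0..L, f x ^ 2
      = L * ((L - -L)⁻¹ • (2 * ∫ x in 0..L, f x ^ 2) + (S 0 / L) ^ 2) := by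
    rw [S_zero, smul_eq_mul]
    field_simp
    ring
  rw [total, funext terms]
  exact parseval.nat_add_neg.mul_left L

lemma hasSum_sq_integral_mul_sin {v : ℝ → ℝ} (hv : Continuous v) {L : ℝ} (hL : 0 < L)
    (hsupp : Function.support v ⊆ Set.Ioo 0 L) :
    HasSum (fun m : ℕ => 2 / L * (∫ x, v x * sin (m * π / L * x)) ^ 2) (∫ x, v x ^ 2) := by
  have v_neg : ∀ x ∈ Set.uIcc 0 L, v (-x) = 0 := fun x hx => by
    rw [Set.uIcc_of_le hL.le] at hx
    by_contra h
    linarith [(hsupp h).1, hx.1]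
  have integral_odd_extension : ∀ w : ℝ → ℝ → ℝ, (∀ x, w 0 x = 0) →
      ∫ x in 0..L, w (v x - v (-x)) x = ∫ x, w (v x) x := fun w hw => by
    rw [intervalIntegral.integral_congr (g := fun x => w (v x) x) fun x hx => by
      simp only [v_neg x hx, sub_zero]]
    exact intervalIntegral.integral_eq_integral_of_support_subset fun x hx =>
      Set.Ioo_subset_Ioc_self (hsupp fun h => hx (by simp only [h, hw]))
  have parseval := hasSum_sq_integral_mul_sin_of_odd (f := fun x => v x - v (-x))
    (fun x => by simp) (by fun_prop) hL
  rw [integral_odd_extension (fun y _ => y ^ 2) (by simp)] at parseval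
  simpa only [fun m : ℕ =>
    integral_odd_extension (fun y x => y * sin (m * π / L * x)) (by simp)] using parseval

lemma hasSum_prod_of_nonneg {ι κ : Type*} {f : ι × κ → ℝ} {g : ι → ℝ} {a : ℝ} (hf : 0 ≤ f)
    (hrow : ∀ i, HasSum (fun j => f (i, j)) (g i)) (hg : HasSum g a) : HasSum f a := by
  have summable : Summable f := (summable_prod_of_nonneg hf).2
    ⟨fun i => (hrow i).summable, by simpa only [(hrow _).tsum_eq] using hg.summable⟩
  have := summable.hasSum.prod_fiberwise hrow
  rw [← this.unique hg]
  exact summable.hasSum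

/-- The pairing of `u` with `sin (m π x / L) sin (n π y / H)`, the Dirichlet eigenfunctions of the
Laplacian on `(0, L) × (0, H)`; it is integrated over the whole plane, the functions `u` of interest
being supported in that rectangle. -/
def sineCoeff (L H : ℝ) (u : ℝ × ℝ → ℝ) (m n : ℕ) : ℝ :=
  ∫ p : ℝ × ℝ, u p * (sin (m * π / L * p.1) * sin (n * π / H * p.2))

/-- The sine coefficient of `u` in the first variable only. -/
def fstSineCoeff (L : ℝ) (u : ℝ × ℝ → ℝ) (m : ℕ) (y : ℝ) : ℝ :=
  ∫ x, u (x, y) * sin (m * π / L * x)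

section RectangleSupport

variable {L H : ℝ} {u : ℝ × ℝ → ℝ}

lemma hasCompactSupport_of_support_subset_Ioo_prod
    (hsupp : Function.support u ⊆ Set.Ioo 0 L ×ˢ Set.Ioo 0 H) : HasCompactSupport u :=
  HasCompactSupport.of_support_subset_isCompact (isCompact_Icc.prod isCompact_Icc)
    (hsupp.trans (Set.prod_mono Set.Ioo_subset_Icc_self Set.Ioo_subset_Icc_self))

lemma support_fstSineCoeff_subset (hsupp : Function.support u ⊆ Set.Ioo 0 L ×ˢ Set.Ioo 0 H)
    (m : ℕ) : Function.support (fstSineCoeff L u m) ⊆ Set.Ioo 0 H := fun y hy => by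
  obtain ⟨x, hx⟩ : ∃ x, u (x, y) ≠ 0 := by
    by_contra! h
    exact hy (by simp only [fstSineCoeff, h, zero_mul, integral_zero])
  exact (hsupp hx).2

lemma continuous_fstSineCoeff (hu : Continuous u)
    (hsupp : Function.support u ⊆ Set.Ioo 0 L ×ˢ Set.Ioo 0 H) (m : ℕ) :
    Continuous (fstSineCoeff L u m) := by
  have setIntegral : fstSineCoeff L u m
      = fun y => ∫ x in Set.Icc 0 L, u (x, y) * sin (m * π / L * x) := funext fun y =>
    (setIntegral_eq_integral_of_forall_compl_eq_zero fun x hx => by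
      rw [Function.notMem_support.1 fun h => hx (Set.Ioo_subset_Icc_self (hsupp h).1),
        zero_mul]).symm
  rw [setIntegral]
  exact continuous_parametric_integral_of_continuous
    (f := fun y x => u (x, y) * sin (m * π / L * x)) (by fun_prop) isCompact_Icc

lemma sineCoeff_eq_integral_fstSineCoeff_mul_sin (hu : Continuous u) (hcs : HasCompactSupport u)
    (m n : ℕ) :
    sineCoeff L H u m n = ∫ y, fstSineCoeff L u m y * sin (n * π / H * y) := by
  have integrable : Integrable
      (fun p : ℝ × ℝ => u p * (sin (m * π / L * p.1) * sin (n * π / H * p.2))) :=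
    Continuous.integrable_of_hasCompactSupport (by fun_prop) hcs.mul_right
  rw [Measure.volume_eq_prod] at integrable
  rw [sineCoeff, Measure.volume_eq_prod, integral_prod_symm _ integrable]
  simp only [fstSineCoeff, ← integral_mul_const, mul_assoc]

lemma hasSum_integral_fstSineCoeff_sq (hL : 0 < L) (hu : Continuous u)
    (hsupp : Function.support u ⊆ Set.Ioo 0 L ×ˢ Set.Ioo 0 H) :
    HasSum (fun m => 2 / L * ∫ y, fstSineCoeff L u m y ^ 2) (∫ p, u p ^ 2) := by
  have integrable_sq : Integrable (fun p => u p ^ 2) :=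
    Continuous.integrable_of_hasCompactSupport (by fun_prop)
      ((hasCompactSupport_of_support_subset_Ioo_prod hsupp).comp_left (g := fun t : ℝ => t ^ 2)
        (by simp))
  have fiberwise : ∀ y, HasSum (fun m => 2 / L * fstSineCoeff L u m y ^ 2) (∫ x, u (x, y) ^ 2) :=
    fun y => hasSum_sq_integral_mul_sin (v := fun x => u (x, y)) (by fun_prop) hL
      fun x hx => (hsupp hx).1
  rw [Measure.volume_eq_prod] at integrable_sq
  rw [Measure.volume_eq_prod, integral_prod_symm _ integrable_sq]
  simp only [← integral_const_mul]
  refine hasSum_integral_of_dominated_convergence (fun m y => 2 / L * fstSineCoeff L u m y ^ 2)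
    (fun m => ?_) (fun m => .of_forall fun y => ?_) (.of_forall fun y => (fiberwise y).summable)
    ?_ (.of_forall fiberwise)
  · have := continuous_fstSineCoeff hu hsupp m
    fun_prop
  · rw [Real.norm_of_nonneg (by positivity)]
  · simpa only [(fiberwise _).tsum_eq] using integrable_sq.integral_prod_right

lemma hasSum_sineCoeff_sq (hL : 0 < L) (hH : 0 < H) (hu : Continuous u)
    (hsupp : Function.support u ⊆ Set.Ioo 0 L ×ˢ Set.Ioo 0 H) :
    HasSum (fun p : ℕ × ℕ => 4 / (L * H) * sineCoeff L H u p.1 p.2 ^ 2) (∫ p, u p ^ 2) := by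
  refine hasSum_prod_of_nonneg (fun p => by positivity) (fun m => ?_)
    (hasSum_integral_fstSineCoeff_sq hL hu hsupp)
  have row := (hasSum_sq_integral_mul_sin (continuous_fstSineCoeff hu hsupp m) hH
    (support_fstSineCoeff_subset hsupp m)).mul_left (2 / L)
  have : ∀ n, 4 / (L * H) * sineCoeff L H u m n ^ 2
      = 2 / L * (2 / H * (∫ y, fstSineCoeff L u m y * sin (n * π / H * y)) ^ 2) := fun n => by
    rw [sineCoeff_eq_integral_fstSineCoeff_mul_sin hu
      (hasCompactSupport_of_support_subset_Ioo_prod hsupp)]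
    ring
  simpa only [this] using row

end RectangleSupport

section TestFunctions

variable {Ω : Set (ℝ × ℝ)} {u w φ : ℝ × ℝ → ℝ}

lemma contDiff_pd (hφ : ContDiff ℝ (⊤ : ℕ∞) φ) (v : ℝ × ℝ) : ContDiff ℝ (⊤ : ℕ∞) (pd v φ) :=
  (hφ.fderiv_right (m := (⊤ : ℕ∞)) (by norm_cast)).clm_apply contDiff_const

lemma Adm.support_subset (hu : Adm Ω u) : Function.support u ⊆ Ω :=
  (subset_tsupport u).trans hu.2.2

lemma Adm.pd (hu : Adm Ω u) (v : ℝ × ℝ) : Adm Ω (pd v u) :=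
  ⟨contDiff_pd hu.1 v, hu.2.1.fderiv_apply (𝕜 := ℝ) v,
    (tsupport_fderiv_apply_subset ℝ v).trans hu.2.2⟩

lemma Adm.add (hu : Adm Ω u) (hw : Adm Ω w) : Adm Ω (fun p => u p + w p) :=
  ⟨hu.1.add hw.1, hu.2.1.add hw.2.1,
    (tsupport_add u w).trans (Set.union_subset hu.2.2 hw.2.2)⟩

lemma Adm.lap (hu : Adm Ω u) : Adm Ω (lap u) :=
  ((hu.pd (1, 0)).pd (1, 0)).add ((hu.pd (0, 1)).pd (0, 1))

lemma Adm.integrable_mul (hu : Adm Ω u) (hφ : Continuous φ) : Integrable (fun p => u p * φ p) :=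
  (hu.1.continuous.mul hφ).integrable_of_hasCompactSupport hu.2.1.mul_right

lemma Adm.memLp (hu : Adm Ω u) (p : ENNReal) : MemLp u p :=
  hu.1.continuous.memLp_of_hasCompactSupport hu.2.1

lemma Adm.integral_sq_pos (hu : Adm Ω u) (hne : u ≠ 0) : 0 < ∫ p, u p ^ 2 := by
  obtain ⟨p, hp⟩ := Function.ne_iff.1 hne
  have := hu.1.continuous
  exact Continuous.integral_pos_of_hasCompactSupport_nonneg_nonzero (x := p) (by fun_prop)
    (hu.2.1.comp_left (g := fun t : ℝ => t ^ 2) (by simp)) (fun _ => sq_nonneg _)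
    (pow_ne_zero 2 hp)

lemma integral_pd_mul (hu : Adm Ω u) (hφ : ContDiff ℝ (⊤ : ℕ∞) φ) (v : ℝ × ℝ) :
    ∫ p, pd v u p * φ p = -∫ p, u p * pd v φ p := by
  have := integral_mul_fderiv_eq_neg_fderiv_mul_of_integrable (μ := volume) (f := u) (g := φ)
    (v := v) ((hu.pd v).integrable_mul hφ.continuous)
    (hu.integrable_mul (contDiff_pd hφ v).continuous) (hu.integrable_mul hφ.continuous)
    (fun x _ => (hu.1.differentiable (by simp)).differentiableAt)
    (fun x _ => (hφ.differentiable (by simp)).differentiableAt)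
  simp only [pd, this, neg_neg]

lemma integral_lap_mul (hu : Adm Ω u) (hφ : ContDiff ℝ (⊤ : ℕ∞) φ) :
    ∫ p, lap u p * φ p = ∫ p, u p * lap φ p := by
  have green : ∀ v, ∫ p, pd v (pd v u) p * φ p = ∫ p, u p * pd v (pd v φ) p := fun v => by
    rw [integral_pd_mul (hu.pd v) hφ, integral_pd_mul hu (contDiff_pd hφ v), neg_neg]
  have integrable : ∀ v, Integrable fun p => u p * pd v (pd v φ) p := fun v =>
    hu.integrable_mul (contDiff_pd (contDiff_pd hφ v) v).continuous
  simp only [lap, uxx, uyy, add_mul, mul_add]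
  rw [integral_add (((hu.pd _).pd _).integrable_mul hφ.continuous)
    (((hu.pd _).pd _).integrable_mul hφ.continuous),
    integral_add (integrable _) (integrable _), green, green]

lemma pd_fst_mul_snd {f g : ℝ → ℝ} (hf : Differentiable ℝ f) (hg : Differentiable ℝ g)
    (v : ℝ × ℝ) :
    pd v (fun p => f p.1 * g p.2)
      = fun p => v.1 * (deriv f p.1 * g p.2) + v.2 * (f p.1 * deriv g p.2) := by
  ext p
  have hasFDerivAt := ((hf p.1).hasDerivAt.comp_hasFDerivAt p (hasFDerivAt_fst (𝕜 := ℝ))).mul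
    ((hg p.2).hasDerivAt.comp_hasFDerivAt p (hasFDerivAt_snd (𝕜 := ℝ)))
  refine (congrArg (· v) hasFDerivAt.fderiv).trans ?_
  simp only [Function.comp_apply, add_apply, smul_apply, smul_eq_mul,
    ContinuousLinearMap.coe_fst', ContinuousLinearMap.coe_snd']
  ring

lemma lap_sin_mul_sin (α β : ℝ) (p : ℝ × ℝ) :
    lap (fun p => sin (α * p.1) * sin (β * p.2)) p
      = -(α ^ 2 + β ^ 2) * (sin (α * p.1) * sin (β * p.2)) := by
  have deriv_sin : ∀ γ : ℝ, deriv (fun t => sin (γ * t)) = fun t => γ * cos (γ * t) := fun γ => by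
    ext t
    simpa [mul_comm] using ((hasDerivAt_id t).const_mul γ).sin.deriv
  have deriv_cos : ∀ γ : ℝ, deriv (fun t => γ * cos (γ * t)) = fun t => -γ ^ 2 * sin (γ * t) :=
    fun γ => by
      ext t
      refine ((((hasDerivAt_id t).const_mul γ).cos).const_mul γ).deriv.trans ?_
      simp only [id]
      ring
  have pd_fst : pd (1, 0) (fun p => sin (α * p.1) * sin (β * p.2))
      = fun p => α * cos (α * p.1) * sin (β * p.2) := by
    rw [pd_fst_mul_snd (f := fun t => sin (α * t)) (g := fun t => sin (β * t)) (by fun_prop)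
      (by fun_prop), deriv_sin]
    simp
  have pd_snd : pd (0, 1) (fun p => sin (α * p.1) * sin (β * p.2))
      = fun p => sin (α * p.1) * (β * cos (β * p.2)) := by
    rw [pd_fst_mul_snd (f := fun t => sin (α * t)) (g := fun t => sin (β * t)) (by fun_prop)
      (by fun_prop), deriv_sin β]
    simp
  rw [lap, uxx, uyy, pd_fst, pd_snd,
    pd_fst_mul_snd (f := fun t => α * cos (α * t)) (g := fun t => sin (β * t)) (by fun_prop)
      (by fun_prop), deriv_cos,
    pd_fst_mul_snd (f := fun t => sin (α * t)) (g := fun t => β * cos (β * t)) (by fun_prop)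
      (by fun_prop), deriv_cos]
  ring

/-- The Dirichlet Laplacian eigenvalue of the rectangle `(0, L) × (0, H)` whose eigenfunction is
tested in `sineCoeff L H u m n`. -/
def rectEigenvalue (L H : ℝ) (m n : ℕ) : ℝ := (m * π / L) ^ 2 + (n * π / H) ^ 2

lemma sineCoeff_lap (hu : Adm Ω u) (L H : ℝ) (m n : ℕ) :
    sineCoeff L H (lap u) m n = -rectEigenvalue L H m n * sineCoeff L H u m n := by
  rw [sineCoeff, integral_lap_mul hu (by fun_prop), sineCoeff, ← integral_const_mul]
  simp only [lap_sin_mul_sin, rectEigenvalue]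
  exact integral_congr_ae (.of_forall fun p => by ring)

lemma eq_zero_of_sineCoeff_eq_zero {L H ρ : ℝ} (hL : 0 < L) (hH : 0 < H)
    (hw : Adm (Set.Ioo 0 L ×ˢ Set.Ioo 0 H) w) (hρ : ∫ p, lap w p ^ 2 ≤ ρ * ∫ p, w p ^ 2)
    (hzero : ∀ m n, rectEigenvalue L H m n ^ 2 ≤ ρ → sineCoeff L H w m n = 0) : w = 0 := by
  by_contra hne
  have parseval := hasSum_sineCoeff_sq hL hH hw.1.continuous hw.support_subset
  have parseval_lap := hasSum_sineCoeff_sq hL hH hw.lap.1.continuous hw.lap.support_subset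
  have excess := parseval_lap.sub (parseval.mul_left ρ)
  have excess_term : ∀ p : ℕ × ℕ, 4 / (L * H) * sineCoeff L H (lap w) p.1 p.2 ^ 2
      - ρ * (4 / (L * H) * sineCoeff L H w p.1 p.2 ^ 2)
      = 4 / (L * H) * ((rectEigenvalue L H p.1 p.2 ^ 2 - ρ) * sineCoeff L H w p.1 p.2 ^ 2) :=
    fun p => by
      rw [sineCoeff_lap hw]
      ring
  simp only [excess_term] at excess
  have term_nonneg : ∀ p : ℕ × ℕ, 0 ≤ 4 / (L * H) *
      ((rectEigenvalue L H p.1 p.2 ^ 2 - ρ) * sineCoeff L H w p.1 p.2 ^ 2) := fun p => by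
    rcases le_or_gt (rectEigenvalue L H p.1 p.2 ^ 2) ρ with hle | hlt
    · simp [hzero _ _ hle]
    · have := sub_pos.2 hlt
      positivity
  rw [le_antisymm (sub_nonpos.2 hρ) (excess.nonneg term_nonneg),
    hasSum_zero_iff_of_nonneg term_nonneg] at excess
  have sineCoeff_eq_zero : ∀ p : ℕ × ℕ, sineCoeff L H w p.1 p.2 = 0 := fun p => by
    rcases le_or_gt (rectEigenvalue L H p.1 p.2 ^ 2) ρ with hle | hlt
    · exact hzero _ _ hle
    · simpa [hL.ne', hH.ne', (sub_pos.2 hlt).ne'] using congrFun excess p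
  simp only [sineCoeff_eq_zero, zero_pow two_ne_zero, mul_zero] at parseval
  exact (hw.integral_sq_pos hne).ne (hasSum_zero.unique parseval)

end TestFunctions

/-! ### Rayleigh quotients -/

/-- The linear combination `∑ i, c i * u i` of real functions, spelled as in `lamk`. -/
def linComb {ι X : Type*} [Fintype ι] (u : ι → X → ℝ) (c : ι → ℝ) : X → ℝ :=
  fun q => ∑ i, c i * u i q

section LinearCombinations

variable {ι X : Type*} [Fintype ι]

lemma linComb_smul (u : ι → X → ℝ) (t : ℝ) (c : ι → ℝ) (q : X) :
    linComb u (t • c) q = t * linComb u c q := by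
  simp only [linComb, Finset.mul_sum, Pi.smul_apply, smul_eq_mul, mul_assoc]

lemma linComb_ne_zero {u : ι → X → ℝ} (hli : LinearIndependent ℝ u) {c : ι → ℝ} (hc : c ≠ 0) :
    linComb u c ≠ 0 := fun h =>
  hc <| funext <| Fintype.linearIndependent_iff.1 hli c <| by
    rw [← h]
    ext q
    simp only [linComb, Finset.sum_apply, Pi.smul_apply, smul_eq_mul]

lemma continuous_integral_linComb_sq [MeasurableSpace X] {μ : Measure X} {g : ι → X → ℝ}
    (hg : ∀ i, MemLp (g i) 2 μ) : Continuous fun c => ∫ p, linComb g c p ^ 2 ∂μ := by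
  have integrable : ∀ (c : ι → ℝ) i j, Integrable (fun p => c i * c j * (g i p * g j p)) μ :=
    fun c i j => ((hg i).integrable_mul (hg j)).const_mul _
  have sq_linComb : ∀ c p, linComb g c p ^ 2 = ∑ i, ∑ j, c i * c j * (g i p * g j p) :=
    fun c p => by
      rw [linComb, sq, Finset.sum_mul_sum]
      exact Finset.sum_congr rfl fun i _ => Finset.sum_congr rfl fun j _ => by ring
  have expand : ∀ c : ι → ℝ,
      ∫ p, linComb g c p ^ 2 ∂μ = ∑ i, ∑ j, c i * c j * ∫ p, g i p * g j p ∂μ := fun c => by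
    simp only [sq_linComb]
    rw [integral_finsetSum _ fun i _ => integrable_finsetSum _ fun j _ => integrable c i j]
    refine Finset.sum_congr rfl fun i _ => ?_
    simp only [integral_finsetSum _ fun j _ => integrable c i j, integral_const_mul]
  simp only [expand]
  fun_prop

variable {Ω : Set (ℝ × ℝ)} {u : ι → ℝ × ℝ → ℝ}

lemma Adm.linComb (hu : ∀ i, Adm Ω (u i)) (c : ι → ℝ) : Adm Ω (linComb u c) := by
  have isCompact : IsCompact (⋃ i, tsupport (u i)) := isCompact_iUnion fun i => (hu i).2.1
  have support_subset : Function.support (_root_.linComb u c) ⊆ ⋃ i, tsupport (u i) :=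
    fun q hq => by
      obtain ⟨i, -, hi⟩ := Finset.exists_ne_zero_of_sum_ne_zero hq
      exact Set.mem_iUnion.2 ⟨i, subset_tsupport _ (right_ne_zero_of_mul hi)⟩
  exact ⟨ContDiff.sum fun i _ => contDiff_const.mul (hu i).1,
    HasCompactSupport.of_support_subset_isCompact isCompact support_subset,
    (closure_minimal support_subset isCompact.isClosed).trans
      (Set.iUnion_subset fun i => (hu i).2.2)⟩

lemma pd_linComb (hu : ∀ i, Differentiable ℝ (u i)) (c : ι → ℝ) (v : ℝ × ℝ) :
    pd v (linComb u c) = linComb (fun i => pd v (u i)) c := by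
  ext q
  unfold pd linComb
  rw [fderiv_fun_sum fun i _ => (hu i q).const_mul (c i)]
  simp [fderiv_const_mul (hu _ q)]

lemma lap_linComb (hu : ∀ i, ContDiff ℝ (⊤ : ℕ∞) (u i)) (c : ι → ℝ) :
    lap (linComb u c) = linComb (fun i => lap (u i)) c := by
  have pd_pd : ∀ v, pd v (pd v (linComb u c)) = linComb (fun i => pd v (pd v (u i))) c :=
    fun v => by
      rw [pd_linComb fun i => (hu i).differentiable (by simp),
        pd_linComb fun i => (contDiff_pd (hu i) v).differentiable (by simp)]
  ext q
  simp only [lap, uxx, uyy, pd_pd, linComb, mul_add, Finset.sum_add_distrib]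

lemma sineCoeff_linComb (hu : ∀ i, Adm Ω (u i)) (c : ι → ℝ) (L H : ℝ) (m n : ℕ) :
    sineCoeff L H (linComb u c) m n = ∑ i, c i * sineCoeff L H (u i) m n := by
  simp only [sineCoeff, linComb, Finset.sum_mul, mul_assoc (c _)]
  rw [integral_finsetSum _ fun i _ => ((hu i).integrable_mul (by fun_prop)).const_mul (c i)]
  simp only [integral_const_mul]

end LinearCombinations

/-- The Rayleigh quotient of the biharmonic operator; it is `0` at `w = 0`. -/
def rayleigh (w : ℝ × ℝ → ℝ) : ℝ := (∫ p, lap w p ^ 2) / ∫ p, w p ^ 2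

/-- The largest Rayleigh quotient over the nonzero linear combinations of a tuple of functions. -/
def maxRayleigh {ι : Type*} [Fintype ι] (u : ι → ℝ × ℝ → ℝ) : ℝ :=
  sSup {r | ∃ c : ι → ℝ, c ≠ 0 ∧ r = rayleigh (linComb u c)}

lemma rayleigh_nonneg (w : ℝ × ℝ → ℝ) : 0 ≤ rayleigh w :=
  div_nonneg (integral_nonneg fun _ => sq_nonneg _) (integral_nonneg fun _ => sq_nonneg _)

lemma maxRayleigh_nonneg {ι : Type*} [Fintype ι] (u : ι → ℝ × ℝ → ℝ) : 0 ≤ maxRayleigh u :=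
  Real.sSup_nonneg <| by
    rintro _ ⟨c, -, rfl⟩
    exact rayleigh_nonneg _

lemma bddAbove_image_compl_zero_of_smul_invariant {E : Type*} [NormedAddCommGroup E]
    [NormedSpace ℝ E] [ProperSpace E] {f : E → ℝ} (hf : ContinuousOn f (Metric.sphere 0 1))
    (hinv : ∀ t : ℝ, 0 < t → ∀ x, f (t • x) = f x) : BddAbove (f '' {0}ᶜ) := by
  refine ((isCompact_sphere (0 : E) 1).bddAbove_image hf).mono ?_
  rintro _ ⟨x, hx, rfl⟩
  have hx : 0 < ‖x‖ := norm_pos_iff.2 hx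
  refine ⟨‖x‖⁻¹ • x, ?_, hinv _ (inv_pos.2 hx) x⟩
  rw [mem_sphere_zero_iff_norm, norm_smul, norm_inv, norm_norm, inv_mul_cancel₀ hx.ne']

section RayleighBounds

variable {ι : Type*} [Fintype ι] {Ω : Set (ℝ × ℝ)} {u : ι → ℝ × ℝ → ℝ}

lemma bddAbove_rayleigh (hu : ∀ i, Adm Ω (u i)) (hli : LinearIndependent ℝ u) :
    BddAbove {r | ∃ c : ι → ℝ, c ≠ 0 ∧ r = rayleigh (linComb u c)} := by
  have rayleigh_eq : ∀ c, rayleigh (linComb u c)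
      = (∫ p, linComb (fun i => lap (u i)) c p ^ 2) / ∫ p, linComb u c p ^ 2 := fun c => by
    rw [rayleigh, lap_linComb fun i => (hu i).1]
  have smul_sq : ∀ (g : ι → ℝ × ℝ → ℝ) (t : ℝ) c,
      ∫ p, linComb g (t • c) p ^ 2 = t ^ 2 * ∫ p, linComb g c p ^ 2 := fun g t c => by
    simp only [linComb_smul, mul_pow, integral_const_mul]
  refine (bddAbove_image_compl_zero_of_smul_invariant
    (f := fun c => rayleigh (linComb u c)) ?_ fun t ht c => ?_).mono ?_
  · simp only [rayleigh_eq]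
    exact (continuous_integral_linComb_sq fun i => (hu i).lap.memLp 2).continuousOn.div
      (continuous_integral_linComb_sq fun i => (hu i).memLp 2).continuousOn fun c hc =>
        ((Adm.linComb hu c).integral_sq_pos
          (linComb_ne_zero hli (ne_zero_of_mem_unit_sphere ⟨c, hc⟩))).ne'
  · simp only [rayleigh_eq, smul_sq]
    exact mul_div_mul_left _ _ (pow_ne_zero 2 ht.ne')
  · rintro _ ⟨c, hc, rfl⟩
    exact ⟨c, hc, rfl⟩

lemma rayleigh_le_maxRayleigh (hu : ∀ i, Adm Ω (u i)) (hli : LinearIndependent ℝ u) {c : ι → ℝ}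
    (hc : c ≠ 0) : rayleigh (linComb u c) ≤ maxRayleigh u :=
  le_csSup (bddAbove_rayleigh hu hli) ⟨c, hc, rfl⟩

-- With fewer conditions `sineCoeff = 0` than functions, a nonzero combination satisfies them all.
lemma card_le_card_of_rayleigh_le {L H ρ : ℝ} (hL : 0 < L) (hH : 0 < H)
    (hu : ∀ i, Adm (Set.Ioo 0 L ×ˢ Set.Ioo 0 H) (u i)) (hli : LinearIndependent ℝ u)
    (hρ : ∀ c ≠ 0, rayleigh (linComb u c) ≤ ρ) {S : Finset (ℕ × ℕ)}
    (hS : ∀ m n, 0 < m → 0 < n → rectEigenvalue L H m n ^ 2 ≤ ρ → (m, n) ∈ S) :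
    Fintype.card ι ≤ S.card := by
  by_contra! hlt
  let sineCoeffs : (ι → ℝ) →ₗ[ℝ] (S → ℝ) :=
    Matrix.mulVecLin (Matrix.of fun z i => sineCoeff L H (u i) z.1.1 z.1.2)
  obtain ⟨c, hker, hc⟩ := (Submodule.ne_bot_iff _).1
    (LinearMap.ker_ne_bot_of_finrank_lt (f := sineCoeffs) (by simpa using hlt))
  have adm := Adm.linComb hu c
  have ne_zero := linComb_ne_zero hli hc
  refine ne_zero (eq_zero_of_sineCoeff_eq_zero hL hH adm
    ((div_le_iff₀ (adm.integral_sq_pos ne_zero)).1 (hρ c hc)) fun m n hmn => ?_)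
  rcases Nat.eq_zero_or_pos m with rfl | hm
  · simp [sineCoeff]
  rcases Nat.eq_zero_or_pos n with rfl | hn
  · simp [sineCoeff]
  rw [sineCoeff_linComb hu]
  simpa [sineCoeffs, Matrix.mulVec, dotProduct, mul_comm] using
    congrFun (LinearMap.mem_ker.1 hker) ⟨(m, n), hS m n hm hn hmn⟩

end RayleighBounds

lemma exists_adm_linearIndependent {Ω : Set (ℝ × ℝ)} (hΩ : IsOpen Ω) (hne : Ω.Nonempty) (k : ℕ) :
    ∃ u : Fin k → ℝ × ℝ → ℝ, (∀ i, Adm Ω (u i)) ∧ LinearIndependent ℝ u := by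
  obtain ⟨p, hp⟩ := hne
  have point := (infinite_of_mem_nhds p (hΩ.mem_nhds hp)).natEmbedding
  have bump : ∀ i : Fin k, ∃ f : ℝ × ℝ → ℝ,
      tsupport f ⊆ Ω \ ((fun j : Fin k => (point j : ℝ × ℝ)) '' {i}ᶜ) ∧ HasCompactSupport f ∧
      ContDiff ℝ (⊤ : ℕ∞) f ∧ Set.range f ⊆ Set.Icc 0 1 ∧ f (point i) = 1 := fun i =>
    exists_contDiff_tsupport_subset <|
      (hΩ.sdiff ((Set.toFinite _).image _).isClosed).mem_nhds ⟨(point i).2, fun ⟨_, hj, hji⟩ =>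
        hj (Fin.ext (point.injective (Subtype.ext hji)))⟩
  choose u tsupport_subset compact smooth _ eq_one using bump
  have eq_zero : ∀ {i j : Fin k}, i ≠ j → u i (point j) = 0 := fun {i j} hij => by
    by_contra h
    exact (tsupport_subset i (subset_tsupport _ h)).2 ⟨j, fun h => hij h.symm, rfl⟩
  refine ⟨u, fun i => ⟨smooth i, compact i, (tsupport_subset i).trans Set.sdiff_subset⟩, ?_⟩
  refine Fintype.linearIndependent_iff.2 fun c hc j => ?_
  have := congrFun hc (point j)
  rwa [Finset.sum_apply, Finset.sum_eq_single_of_mem j (Finset.mem_univ j) fun i _ hij => by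
    rw [Pi.smul_apply, eq_zero hij, smul_zero], Pi.smul_apply, eq_one, smul_eq_mul, mul_one] at this

/-! ### The eigenvalue bound -/

lemma mem_ellipsePts_of_rectEigenvalue_le {L H t : ℝ} (hL : 0 < L) (hH : 0 < H) (ht : 0 ≤ t)
    {m n : ℕ} (hm : 0 < m) (hn : 0 < n) (hle : rectEigenvalue L H m n ≤ t ^ 2) :
    (m, n) ∈ ellipsePts L H (t / π) := by
  refine (mem_ellipsePts hL hH (by positivity)).2 ⟨hm, hn, ?_⟩
  rw [div_pow t, le_div_iff₀ (by positivity)]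
  calc _ = rectEigenvalue L H m n := by
        unfold rectEigenvalue
        ring
    _ ≤ t ^ 2 := hle

lemma four_pi_mul_card_add_le {ι : Type*} [Fintype ι] {L H : ℝ} (hL : 0 < L) (hH : 0 < H)
    {u : ι → ℝ × ℝ → ℝ} (hu : ∀ i, Adm (Set.Ioo 0 L ×ˢ Set.Ioo 0 H) (u i))
    (hli : LinearIndependent ℝ u) :
    4 * π * Fintype.card ι + 2 * (L + H) * maxRayleigh u ^ (1 / 4 : ℝ)
      ≤ L * H * maxRayleigh u ^ (1 / 2 : ℝ)
        + 4 * π * (7 * (H / L + 1 / (H / L)) + 13)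
          * (L * maxRayleigh u ^ (1 / 4 : ℝ)) ^ (11 / 12 : ℝ) := by
  have rho_nonneg := maxRayleigh_nonneg u
  set t := maxRayleigh u ^ (1 / 4 : ℝ) with ht
  have t_nonneg : 0 ≤ t := by positivity
  have t_sq : maxRayleigh u ^ (1 / 2 : ℝ) = t ^ 2 := by
    rw [ht, ← Real.rpow_natCast, ← Real.rpow_mul rho_nonneg]
    norm_num
  have t_pow_four : maxRayleigh u = (t ^ 2) ^ 2 := by
    rw [← t_sq, ← Real.rpow_natCast, ← Real.rpow_mul rho_nonneg]
    norm_num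
  have card_le := card_le_card_of_rayleigh_le hL hH hu hli
    (fun c hc => rayleigh_le_maxRayleigh hu hli hc) fun m n hm hn hle =>
      mem_ellipsePts_of_rectEigenvalue_le hL hH t_nonneg hm hn
        (le_of_sq_le_sq (t_pow_four ▸ hle) (by positivity))
  have error_le : (L * (t / π)) ^ (11 / 12 : ℝ) ≤ (L * t) ^ (11 / 12 : ℝ) := by
    gcongr
    exact div_le_self t_nonneg (by linarith [pi_gt_three])
  calc _ ≤ 4 * π * (π * (L * H) * (t / π) ^ 2 / 4 - (L + H) * (t / π) / 2
        + (7 * (H / L + 1 / (H / L)) + 13) * (L * t) ^ (11 / 12 : ℝ)) + 2 * (L + H) * t := by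
        gcongr
        refine (Nat.cast_le.2 card_le).trans
          ((card_ellipsePts_le hL hH (by positivity)).trans ?_)
        gcongr
    _ = _ := by
        rw [t_sq]
        generalize (L * t) ^ (11 / 12 : ℝ) = E, 7 * (H / L + 1 / (H / L)) + 13 = K
        field_simp
        ring

lemma lamk_mem_of_isClosed {k : ℕ} {a : ℝ} (ha : 0 < a) {S : Set ℝ} (hS : IsClosed S)
    (hmem : ∀ u : Fin k → ℝ × ℝ → ℝ, (∀ i, Adm (Rect a) (u i)) → LinearIndependent ℝ u →
      maxRayleigh u ∈ S) : lamk k a ∈ S := by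
  have isOpen_rect : IsOpen (Rect a) := isOpen_Ioo.prod isOpen_Ioo
  have rect_nonempty : (Rect a).Nonempty :=
    (Set.nonempty_Ioo.2 ha).prod (Set.nonempty_Ioo.2 (by positivity))
  obtain ⟨u₀, hu₀, hli₀⟩ := exists_adm_linearIndependent isOpen_rect rect_nonempty k
  refine closure_minimal ?_ hS (csInf_mem_closure ⟨maxRayleigh u₀, u₀, hu₀, hli₀, rfl⟩ ⟨0, ?_⟩)
  · rintro _ ⟨u, hu, hli, rfl⟩
    exact hmem u hu hli
  · rintro _ ⟨u, -, -, rfl⟩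
    exact maxRayleigh_nonneg u

lemma lamk_nonneg {a : ℝ} (ha : 0 < a) (k : ℕ) : 0 ≤ lamk k a :=
  lamk_mem_of_isClosed ha isClosed_Ici fun u _ _ => maxRayleigh_nonneg u

lemma four_pi_mul_add_le_lamk {a : ℝ} (ha : 0 < a) (k : ℕ) :
    4 * π * k + 2 * (a + 1 / a) * lamk k a ^ (1 / 4 : ℝ)
      ≤ lamk k a ^ (1 / 2 : ℝ)
        + 4 * π * (7 * (1 / a ^ 2 + a ^ 2) + 13)
          * (a * lamk k a ^ (1 / 4 : ℝ)) ^ (11 / 12 : ℝ) := by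
  have isClosed : IsClosed {ρ : ℝ | 4 * π * k + 2 * (a + 1 / a) * ρ ^ (1 / 4 : ℝ)
      ≤ ρ ^ (1 / 2 : ℝ)
        + 4 * π * (7 * (1 / a ^ 2 + a ^ 2) + 13) * (a * ρ ^ (1 / 4 : ℝ)) ^ (11 / 12 : ℝ)} := by
    have rpow : ∀ {f : ℝ → ℝ} {s : ℝ}, 0 ≤ s → Continuous f → Continuous fun ρ => f ρ ^ s :=
      fun hs hf => (Real.continuous_rpow_const hs).comp hf
    have fourth_root := rpow (s := 1 / 4) (by norm_num) continuous_id
    exact isClosed_le (by fun_prop) ((rpow (by norm_num) continuous_id).add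
      ((rpow (by norm_num) (fourth_root.const_mul a)).const_mul _))
  refine lamk_mem_of_isClosed ha isClosed fun u hu hli => ?_
  have aspect : 1 / a / a = 1 / a ^ 2 := by field_simp
  have bound := four_pi_mul_card_add_le ha (one_div_pos.2 ha) hu hli
  rw [aspect, one_div_one_div, mul_one_div_cancel ha.ne', one_mul, Fintype.card_fin] at bound
  exact bound

theorem uniform_refined_lower_bound_general (A : ℝ) (hA : 1 ≤ A) :
    ∃ C : ℝ, 0 < C ∧ ∀ a ∈ Set.Icc A⁻¹ A, ∀ k : ℕ, 1 ≤ k →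
      (lamk k a) ^ ((1 : ℝ) / 2) ≥
        4 * π * k + 2 * (a + 1 / a) * (lamk k a) ^ ((1 : ℝ) / 4)
          - C * (lamk k a) ^ ((11 / 12 : ℝ) / 4) := by
  refine ⟨4 * π * (7 * (A ^ 2 + A ^ 2) + 13) * A, by positivity, fun a ⟨hAa, haA⟩ k _ => ?_⟩
  have a_pos : 0 < a := (by positivity : 0 < A⁻¹).trans_le hAa
  have lam_nonneg := lamk_nonneg a_pos k
  have inv_sq_le : 1 / a ^ 2 ≤ A ^ 2 := by
    rw [← one_div_pow, one_div]
    gcongr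
    exact inv_le_of_inv_le₀ (by positivity) hAa
  have rpow_le : (a * lamk k a ^ (1 / 4 : ℝ)) ^ (11 / 12 : ℝ)
      ≤ A * lamk k a ^ ((11 / 12 : ℝ) / 4) := by
    rw [Real.mul_rpow a_pos.le (by positivity), ← Real.rpow_mul lam_nonneg,
      show (1 / 4 : ℝ) * (11 / 12) = 11 / 12 / 4 by norm_num]
    gcongr
    calc a ^ (11 / 12 : ℝ) ≤ A ^ (11 / 12 : ℝ) := by gcongr
      _ ≤ A := Real.rpow_le_self_of_one_le hA (by norm_num)
  have error_le : 4 * π * (7 * (1 / a ^ 2 + a ^ 2) + 13)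
        * (a * lamk k a ^ (1 / 4 : ℝ)) ^ (11 / 12 : ℝ)
      ≤ 4 * π * (7 * (A ^ 2 + A ^ 2) + 13) * (A * lamk k a ^ ((11 / 12 : ℝ) / 4)) := by
    gcongr
  linarith [four_pi_mul_add_le_lamk a_pos k]

/-- Uniform refined lower bound on bounded ranges of `a`: for every `A ≥ 1`
there are `C > 0` and `θ ∈ (0,1)` such that for all `a ∈ [1,A]` and `k ≥ 1`,
`λ_k(a)^{1/2} ≥ 4πk + 2(a + 1/a)λ_k(a)^{1/4} − Cλ_k(a)^{θ/4} − 3π`. -/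
theorem uniform_refined_lower_bound (A : ℝ) (hA : 1 ≤ A) :
    ∃ C : ℝ, 0 < C ∧ ∃ θ ∈ Set.Ioo (0 : ℝ) 1,
      ∀ a ∈ Set.Icc (1 : ℝ) A, ∀ k : ℕ, 1 ≤ k →
        (lamk k a) ^ ((1 : ℝ) / 2) ≥
          4 * π * k + 2 * (a + 1 / a) * (lamk k a) ^ ((1 : ℝ) / 4)
            - C * (lamk k a) ^ (θ / 4) - 3 * π := by
  obtain ⟨C, hC, bound⟩ := uniform_refined_lower_bound_general A hA
  exact ⟨C, hC, 11 / 12, by norm_num, fun a ha k hk => by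
    linarith [bound a ⟨(inv_le_one_of_one_le₀ hA).trans ha.1, ha.2⟩ k hk, pi_pos]⟩
end
end

section
/- Let N ≥ 2 and let i_1 ≤ i_2 ≤ … ≤ i_p be positive integers with i_1 + … + i_p = k. Then the minimal Dirichlet biharmonic eigenvalues over domains of unit volume in ℝ^N satisfy the subadditivity relation (λ_k*)^{N/4} ≤ (λ_{i_1}*)^{N/4} + … + (λ_{i_p}*)^{N/4}. In particular, (λ_{k+1}*)^{N/4} − (λ_k*)^{N/4} ≤ (λ_1*)^{N/4} for every k ≥ 1. -/
/-! Rescaling lengths by `s⁻¹` multiplies the biharmonic Rayleigh quotient by `s⁴` and volumes by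
`s⁻ᴺ`, so `(λ_k*)^{N/4}` is the least volume of an open set carrying a `k`-dimensional space of
test functions with Rayleigh quotients at most `1`. This least volume is subadditive in `k`: as test
functions have compact support, two such sets may be taken bounded and then translated apart, and on
their disjoint union the direct sum of the two spaces has Rayleigh quotients at most `1`, while the
volumes add up. -/

open MeasureTheory Real Filter

noncomputable section

/-- The Laplacian of `u : ℝ^N → ℝ` as the sum of second derivatives along the
standard basis directions. -/
def lapN {N : ℕ} (u : EuclideanSpace ℝ (Fin N) → ℝ) :
    EuclideanSpace ℝ (Fin N) → ℝ := fun x =>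
  ∑ i : Fin N,
    fderiv ℝ (fun y => fderiv ℝ u y (EuclideanSpace.single i 1)) x
      (EuclideanSpace.single i 1)

/-- Admissible test functions on `Ω ⊆ ℝ^N`: smooth, compactly supported in `Ω`. -/
def AdmN {N : ℕ} (Ω : Set (EuclideanSpace ℝ (Fin N)))
    (u : EuclideanSpace ℝ (Fin N) → ℝ) : Prop :=
  ContDiff ℝ (⊤ : ℕ∞) u ∧ HasCompactSupport u ∧ tsupport u ⊆ Ω

/-- `k`-th Dirichlet eigenvalue of the biharmonic operator on `Ω ⊆ ℝ^N`:
infimum over linearly independent `k`-tuples of admissible functions of the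
maximum of the Rayleigh quotient over nonzero linear combinations. -/
def lamkN (N k : ℕ) (Ω : Set (EuclideanSpace ℝ (Fin N))) : ℝ :=
  sInf { μ | ∃ u : Fin k → (EuclideanSpace ℝ (Fin N) → ℝ),
    (∀ i, AdmN Ω (u i)) ∧ LinearIndependent ℝ u ∧
    μ = sSup { r | ∃ c : Fin k → ℝ, c ≠ 0 ∧
      r = (∫ x, (lapN (fun y => ∑ i, c i * u i y) x) ^ 2) /
          (∫ x, (∑ i, c i * u i x) ^ 2) } }

/-- `λ_k* = inf { λ_k(Ω) : Ω ⊆ ℝ^N open, |Ω| = 1 }`. -/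
def lamStar (N k : ℕ) : ℝ :=
  sInf { μ | ∃ Ω : Set (EuclideanSpace ℝ (Fin N)),
    IsOpen Ω ∧ volume Ω = 1 ∧ μ = lamkN N k Ω }

/-- `ω_N`: the Lebesgue measure of the unit ball in `ℝ^N`. -/
def omegaBall (N : ℕ) : ℝ :=
  (volume (Metric.ball (0 : EuclideanSpace ℝ (Fin N)) 1)).toReal

section NormedSpace

open scoped Pointwise

variable {E F : Type*} [NormedAddCommGroup E] [NormedSpace ℝ E] [NormedAddCommGroup F]
  [NormedSpace ℝ F]

/-- The similarity `x ↦ s • x + b` with ratio `s ≠ 0`, used to rescale and to translate domains. -/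
def homothety {s : ℝ} (hs : s ≠ 0) (b : E) : E ≃ₜ E :=
  (Homeomorph.smulOfNeZero s hs).trans (Homeomorph.addRight b)

lemma homothety_apply {s : ℝ} (hs : s ≠ 0) (b x : E) : homothety hs b x = s • x + b := rfl

lemma fderiv_comp_homothety {s : ℝ} (hs : s ≠ 0) (b : E) (u : E → F) (x : E) :
    fderiv ℝ (u ∘ homothety hs b) x = s • fderiv ℝ u (homothety hs b x) := by
  change fderiv ℝ (fun y => u (s • y + b)) x = _
  rw [fderiv_comp_smul (f := fun y => u (y + b)), fderiv_comp_add_right, homothety_apply]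

lemma exists_disjoint_preimage_homothety [Nontrivial E] {V V' : Set E}
    (hV : Bornology.IsBounded V) (hV' : Bornology.IsBounded V') :
    ∃ b, Disjoint V (homothety one_ne_zero b ⁻¹' V') := by
  obtain ⟨b, hb⟩ : ∃ b, b ∉ V' - V := by
    by_contra! h
    exact NormedSpace.unbounded_univ ℝ E (Set.eq_univ_of_forall h ▸ hV'.sub hV)
  refine ⟨b, Set.disjoint_left.2 fun x hx hx' => hb ⟨_, hx', x, hx, ?_⟩⟩
  rw [homothety_apply, one_smul]
  exact add_sub_cancel_left x b

variable [FiniteDimensional ℝ E] [MeasurableSpace E] [BorelSpace E]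
  (μ : Measure E) [μ.IsAddHaarMeasure]

lemma integral_comp_homothety {s : ℝ} (hs : s ≠ 0) (b : E) (f : E → F) :
    ∫ x, f (homothety hs b x) ∂μ = |(s ^ Module.finrank ℝ E)⁻¹| • ∫ x, f x ∂μ := by
  simp only [homothety_apply]
  rw [Measure.integral_comp_smul μ (fun y => f (y + b)), integral_add_right_eq_self]

lemma measure_preimage_homothety {s : ℝ} (hs : s ≠ 0) (b : E) (V : Set E) :
    μ (homothety hs b ⁻¹' V) = ENNReal.ofReal |(s ^ Module.finrank ℝ E)⁻¹| * μ V := by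
  have h := Measure.addHaar_preimage_smul μ hs ((· + b) ⁻¹' V)
  rwa [measure_preimage_add_right] at h

lemma exists_measure_preimage_homothety_eq_one [Nontrivial E] {V : Set E} (hV : μ V ≠ 0)
    (hV' : μ V ≠ ⊤) :
    ∃ (s : ℝ) (hs : 0 < s), s ^ Module.finrank ℝ E = (μ V).toReal ∧
      μ (homothety hs.ne' 0 ⁻¹' V) = 1 := by
  have hpos : 0 < (μ V).toReal := ENNReal.toReal_pos hV hV'
  have hpow : ((μ V).toReal ^ (Module.finrank ℝ E : ℝ)⁻¹) ^ Module.finrank ℝ E = (μ V).toReal :=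
    Real.rpow_inv_natCast_pow hpos.le Module.finrank_pos.ne'
  refine ⟨_, Real.rpow_pos_of_pos hpos _, hpow, ?_⟩
  rw [measure_preimage_homothety, hpow, abs_of_pos (inv_pos.2 hpos), ENNReal.ofReal_inv_of_pos hpos,
    ENNReal.ofReal_toReal hV', ENNReal.inv_mul_cancel hV hV']

end NormedSpace

section LinearAlgebra

lemma exists_norm_le_mul_norm_of_injective {𝕜 V F G : Type*} [NontriviallyNormedField 𝕜]
    [CompleteSpace 𝕜] [AddCommGroup V] [Module 𝕜 V] [FiniteDimensional 𝕜 V]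
    [NormedAddCommGroup F] [NormedSpace 𝕜 F] [NormedAddCommGroup G] [NormedSpace 𝕜 G]
    (S : V →ₗ[𝕜] F) {T : V →ₗ[𝕜] G} (hT : Function.Injective T) :
    ∃ C, ∀ v, ‖S v‖ ≤ C * ‖T v‖ := by
  let e := LinearEquiv.ofInjective T hT
  let A := LinearMap.toContinuousLinearMap (S ∘ₗ e.symm.toLinearMap)
  refine ⟨‖A‖, fun v => ?_⟩
  simpa [A, e] using A.le_opNorm (e v)

lemma rank_span_range_fin {K M : Type*} [DivisionRing K] [AddCommGroup M] [Module K M] {k : ℕ}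
    {u : Fin k → M} (hu : LinearIndependent K u) :
    Module.rank K (Submodule.span K (Set.range u)) = k := by
  have := FiniteDimensional.span_of_finite K (Set.finite_range u)
  rw [← Module.finrank_eq_rank, finrank_span_eq_card hu, Fintype.card_fin]

end LinearAlgebra

section SquareIntegrable

variable {X : Type*} [MeasurableSpace X] {μ : Measure X}

lemma integral_add_sq_of_disjoint_support {f g : X → ℝ} (hf : MemLp f 2 μ) (hg : MemLp g 2 μ)
    (hfg : Disjoint (Function.support f) (Function.support g)) :
    ∫ x, (f + g) x ^ 2 ∂μ = ∫ x, f x ^ 2 ∂μ + ∫ x, g x ^ 2 ∂μ := by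
  rw [← integral_add hf.integrable_sq hg.integrable_sq]
  congr with x
  have hx : f x * g x = 0 := by
    by_contra h
    exact Set.disjoint_left.1 hfg (left_ne_zero_of_mul h) (right_ne_zero_of_mul h)
  rw [Pi.add_apply]
  linear_combination 2 * hx

lemma norm_toLp_sq {f : X → ℝ} (hf : MemLp f 2 μ) : ‖hf.toLp f‖ ^ 2 = ∫ x, f x ^ 2 ∂μ := by
  rw [← real_inner_self_eq_norm_sq, L2.inner_def]
  refine integral_congr_ae (hf.coeFn_toLp.mono fun x hx => ?_)
  simp [hx, sq]

variable {V : Type*} [AddCommGroup V] [Module ℝ V]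

/-- The map into `L²` induced by a linear family of square-integrable functions. -/
def toL2 (T : V →ₗ[ℝ] X → ℝ) (hT : ∀ v, MemLp (T v) 2 μ) : V →ₗ[ℝ] Lp ℝ 2 μ where
  toFun v := (hT v).toLp (T v)
  map_add' v w := by simp only [map_add, MemLp.toLp_add (hT v) (hT w)]
  map_smul' c v := by simp only [map_smul, MemLp.toLp_const_smul c (hT v), RingHom.id_apply]

lemma exists_integral_sq_le_mul_integral_sq [FiniteDimensional ℝ V] {S T : V →ₗ[ℝ] X → ℝ}
    (hS : ∀ v, MemLp (S v) 2 μ) (hT : ∀ v, MemLp (T v) 2 μ)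
    (hT₀ : ∀ v, ∫ x, T v x ^ 2 ∂μ = 0 → v = 0) :
    ∃ C, ∀ v, ∫ x, S v x ^ 2 ∂μ ≤ C * ∫ x, T v x ^ 2 ∂μ := by
  have hinj : Function.Injective (toL2 T hT) := by
    refine (injective_iff_map_eq_zero _).2 fun v hv => hT₀ v ?_
    rw [← norm_toLp_sq (hT v), sq_eq_zero_iff, norm_eq_zero]
    exact hv
  obtain ⟨C, hC⟩ := exists_norm_le_mul_norm_of_injective (toL2 S hS) hinj
  refine ⟨C ^ 2, fun v => ?_⟩
  rw [← norm_toLp_sq (hS v), ← norm_toLp_sq (hT v), ← mul_pow]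
  exact pow_le_pow_left₀ (norm_nonneg _) (hC v) 2

end SquareIntegrable

section Laplacian

open scoped Laplacian

variable {N : ℕ} {u v : EuclideanSpace ℝ (Fin N) → ℝ}

lemma lapN_eq_laplacian (hu : ContDiff ℝ 2 u) : lapN u = Δ u := by
  ext x
  rw [InnerProductSpace.laplacian_eq_iteratedFDeriv_orthonormalBasis u
    (EuclideanSpace.basisFun (Fin N) ℝ)]
  have hd : DifferentiableAt ℝ (fderiv ℝ u) x :=
    (hu.fderiv_right (m := 1) (by norm_num)).differentiable (by norm_num) x
  simp [lapN, iteratedFDeriv_two_apply, fderiv_clm_apply hd]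

lemma lapN_add (hu : ContDiff ℝ 2 u) (hv : ContDiff ℝ 2 v) : lapN (u + v) = lapN u + lapN v := by
  rw [lapN_eq_laplacian hu, lapN_eq_laplacian hv, lapN_eq_laplacian (u := u + v) (hu.add hv)]
  ext x
  exact hu.contDiffAt.laplacian_add hv.contDiffAt

lemma lapN_smul (c : ℝ) (hu : ContDiff ℝ 2 u) : lapN (c • u) = c • lapN u := by
  rw [lapN_eq_laplacian hu, lapN_eq_laplacian (u := c • u) (hu.const_smul c)]
  ext x
  exact InnerProductSpace.laplacian_smul c hu.contDiffAt

lemma continuous_lapN (hu : ContDiff ℝ 2 u) : Continuous (lapN u) := by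
  refine continuous_finsetSum _ fun i _ => ?_
  have h₁ : ContDiff ℝ 1 fun y => fderiv ℝ u y (EuclideanSpace.single i 1) :=
    (hu.fderiv_right (by norm_num)).clm_apply contDiff_const
  exact (h₁.continuous_fderiv one_ne_zero).clm_apply continuous_const

lemma support_lapN_subset (u : EuclideanSpace ℝ (Fin N) → ℝ) :
    Function.support (lapN u) ⊆ tsupport u := by
  intro x hx
  obtain ⟨i, -, hi⟩ := Finset.exists_ne_zero_of_sum_ne_zero hx
  exact tsupport_fderiv_apply_subset ℝ _ (tsupport_fderiv_apply_subset ℝ _ (subset_tsupport _ hi))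

lemma lapN_comp_homothety {s : ℝ} (hs : s ≠ 0) (b : EuclideanSpace ℝ (Fin N))
    (u : EuclideanSpace ℝ (Fin N) → ℝ) :
    lapN (u ∘ homothety hs b) = s ^ 2 • lapN u ∘ homothety hs b := by
  ext x
  simp only [lapN, fderiv_comp_homothety, Pi.smul_apply, Function.comp_apply, smul_eq_mul,
    Finset.mul_sum]
  refine Finset.sum_congr rfl fun i _ => ?_
  let ei : EuclideanSpace ℝ (Fin N) := EuclideanSpace.single i 1
  change fderiv ℝ (s • ((fun y => fderiv ℝ u y ei) ∘ homothety hs b)) x ei = _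
  rw [fderiv_const_smul_field, Pi.smul_apply, fderiv_comp_homothety, smul_smul, ← sq]
  rfl

end Laplacian

section TestFunctions

variable {N : ℕ} {Ω Ω' : Set (EuclideanSpace ℝ (Fin N))} {u : EuclideanSpace ℝ (Fin N) → ℝ}
  {W : Submodule ℝ (EuclideanSpace ℝ (Fin N) → ℝ)}

/-- The space `C_c^∞(Ω)` of admissible test functions. Its elements are functions on the whole
of `ℝ^N`, so that the test functions on different domains can be added. -/
def testFunctions (Ω : Set (EuclideanSpace ℝ (Fin N))) :
    Submodule ℝ (EuclideanSpace ℝ (Fin N) → ℝ) where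
  carrier := {u | AdmN Ω u}
  zero_mem' := ⟨contDiff_const, HasCompactSupport.zero, by simp [tsupport_eq_empty_iff.2]⟩
  add_mem' hu hv :=
    ⟨hu.1.add hv.1, hu.2.1.add hv.2.1,
      (tsupport_add _ _).trans (Set.union_subset hu.2.2 hv.2.2)⟩
  smul_mem' c _ hu :=
    ⟨hu.1.const_smul c, hu.2.1.smul_left (f := fun _ => c),
      (tsupport_smul_subset_right (fun _ => c) _).trans hu.2.2⟩

lemma testFunctions_mono (h : Ω ⊆ Ω') : testFunctions Ω ≤ testFunctions Ω' :=
  fun _ hu => ⟨hu.1, hu.2.1, hu.2.2.trans h⟩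

lemma disjoint_testFunctions (h : Disjoint Ω Ω') :
    Disjoint (testFunctions Ω) (testFunctions Ω') := by
  refine Submodule.disjoint_def.2 fun u hu hu' => tsupport_eq_empty_iff.1 ?_
  exact Set.subset_empty_iff.1 (h.le_bot.trans' (Set.subset_inter hu.2.2 hu'.2.2))

lemma testFunctions_empty : testFunctions (∅ : Set (EuclideanSpace ℝ (Fin N))) = ⊥ :=
  disjoint_self.1 (disjoint_testFunctions (Set.disjoint_empty ∅))

lemma contDiff_two_of_mem_testFunctions (hu : u ∈ testFunctions Ω) : ContDiff ℝ 2 u :=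
  hu.1.of_le (by norm_cast)

lemma memLp_of_mem_testFunctions (hu : u ∈ testFunctions Ω) : MemLp u 2 :=
  hu.1.continuous.memLp_of_hasCompactSupport hu.2.1

lemma memLp_lapN_of_mem_testFunctions (hu : u ∈ testFunctions Ω) : MemLp (lapN u) 2 :=
  (continuous_lapN (contDiff_two_of_mem_testFunctions hu)).memLp_of_hasCompactSupport
    (hu.2.1.mono' (support_lapN_subset u))

lemma integral_sq_pos_of_mem_testFunctions (hu : u ∈ testFunctions Ω) (hu₀ : u ≠ 0) :
    0 < ∫ x, u x ^ 2 := by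
  obtain ⟨x, hx⟩ := Function.ne_iff.1 hu₀
  refine (hu.1.continuous.pow 2).integral_pos_of_hasCompactSupport_nonneg_nonzero (x := x)
    (hu.2.1.mono fun y hy => ?_) (fun _ => sq_nonneg _) (pow_ne_zero 2 hx)
  exact ne_zero_pow two_ne_zero hy

lemma comp_homothety_mem_testFunctions {s : ℝ} (hs : s ≠ 0) (b : EuclideanSpace ℝ (Fin N))
    (hu : u ∈ testFunctions Ω) : u ∘ homothety hs b ∈ testFunctions (homothety hs b ⁻¹' Ω) := by
  refine ⟨hu.1.comp ((contDiff_const_smul s).add contDiff_const),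
    hu.2.1.comp_homeomorph _, ?_⟩
  rw [tsupport_comp_eq_preimage]
  exact Set.preimage_mono hu.2.2

lemma exists_le_testFunctions_inter_ball [FiniteDimensional ℝ W] (hW : W ≤ testFunctions Ω) :
    ∃ R, W ≤ testFunctions (Ω ∩ Metric.ball 0 R) := by
  obtain ⟨S, hS, rfl⟩ := Submodule.fg_def.1 (Module.Finite.iff_fg.1 ‹FiniteDimensional ℝ W›)
  have hbdd : Bornology.IsBounded (⋃ u ∈ S, tsupport u) :=
    (Bornology.isBounded_biUnion hS).2 fun u hu => (hW (Submodule.subset_span hu)).2.1.isBounded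
  obtain ⟨R, hR⟩ := hbdd.subset_ball 0
  refine ⟨R, Submodule.span_le.2 fun u hu => ?_⟩
  have hmem : u ∈ testFunctions Ω := hW (Submodule.subset_span hu)
  exact ⟨hmem.1, hmem.2.1,
    Set.subset_inter hmem.2.2 ((Set.subset_biUnion_of_mem (u := tsupport) hu).trans hR)⟩

/-- The Laplacian as a linear map on the test functions. -/
def lapLinear (Ω : Set (EuclideanSpace ℝ (Fin N))) :
    testFunctions Ω →ₗ[ℝ] EuclideanSpace ℝ (Fin N) → ℝ where
  toFun u := lapN u
  map_add' u v :=
    lapN_add (contDiff_two_of_mem_testFunctions u.2) (contDiff_two_of_mem_testFunctions v.2)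
  map_smul' c u := lapN_smul c (contDiff_two_of_mem_testFunctions u.2)

lemma exists_integral_lapN_sq_le [FiniteDimensional ℝ W] (hW : W ≤ testFunctions Ω) :
    ∃ C, ∀ u ∈ W, ∫ x, lapN u x ^ 2 ≤ C * ∫ x, u x ^ 2 := by
  obtain ⟨C, hC⟩ := exists_integral_sq_le_mul_integral_sq
    (S := lapLinear Ω ∘ₗ Submodule.inclusion hW) (T := W.subtype)
    (fun u => memLp_lapN_of_mem_testFunctions (hW u.2))
    (fun u => memLp_of_mem_testFunctions (hW u.2)) fun u hu => by
      by_contra h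
      exact (integral_sq_pos_of_mem_testFunctions (hW u.2) (by simpa using h)).ne' hu
  exact ⟨C, fun u hu => hC ⟨u, hu⟩⟩

lemma exists_le_testFunctions_rank_eq [NeZero N] (hΩ : IsOpen Ω) (hne : Ω.Nonempty) (k : ℕ) :
    ∃ W ≤ testFunctions Ω, Module.rank ℝ W = k := by
  obtain ⟨x, hx⟩ := hne
  have hinf : Ω.Infinite := infinite_of_mem_nhds x (hΩ.mem_nhds hx)
  let z : Fin k → EuclideanSpace ℝ (Fin N) := fun i => hinf.natEmbedding Ω i
  have hz : Function.Injective z := fun i j hij =>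
    Fin.ext ((hinf.natEmbedding Ω).injective (Subtype.ext hij))
  have hnhds : ∀ i, Ω \ (z '' {i}ᶜ) ∈ nhds (z i) := fun i =>
    (hΩ.sdiff (Set.toFinite _).isClosed).mem_nhds
      ⟨(hinf.natEmbedding Ω i).2, fun ⟨_, hj, hji⟩ => hj (hz hji)⟩
  choose u hsub hcs hsm _ hone using fun i =>
    exists_contDiff_tsupport_subset (n := (⊤ : ℕ∞)) (hnhds i)
  have heval : LinearMap.funLeft ℝ ℝ z ∘ u = Pi.basisFun ℝ (Fin k) := by
    ext i j
    rcases eq_or_ne j i with rfl | hij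
    · simp [hone]
    · have hzero : u i (z j) = 0 := by
        by_contra h
        exact (hsub i (subset_tsupport _ h)).2 ⟨j, hij, rfl⟩
      simp [hzero, hij]
  have hu : LinearIndependent ℝ u :=
    .of_comp (LinearMap.funLeft ℝ ℝ z) (heval ▸ (Pi.basisFun ℝ (Fin k)).linearIndependent)
  refine ⟨_, Submodule.span_le.2 ?_, rank_span_range_fin hu⟩
  rintro _ ⟨i, rfl⟩
  exact ⟨hsm i, hcs i, (hsub i).trans Set.sdiff_subset⟩

end TestFunctions

section MinMax

variable {N k : ℕ} {Ω : Set (EuclideanSpace ℝ (Fin N))}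
  {W : Submodule ℝ (EuclideanSpace ℝ (Fin N) → ℝ)}

/-- The Rayleigh quotient of the biharmonic operator. -/
def rayleighQuotient (f : EuclideanSpace ℝ (Fin N) → ℝ) : ℝ :=
  (∫ x, lapN f x ^ 2) / ∫ x, f x ^ 2

/-- The supremum of the Rayleigh quotient over the nonzero elements of `W`, which is minimised
over `k`-dimensional `W` in the variational characterisation of the eigenvalues. -/
def supRayleigh (W : Submodule ℝ (EuclideanSpace ℝ (Fin N) → ℝ)) : ℝ :=
  sSup (rayleighQuotient '' {f ∈ W | f ≠ 0})

lemma rayleighQuotient_nonneg (f : EuclideanSpace ℝ (Fin N) → ℝ) : 0 ≤ rayleighQuotient f :=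
  div_nonneg (integral_nonneg fun _ => sq_nonneg _) (integral_nonneg fun _ => sq_nonneg _)

lemma supRayleigh_nonneg (W : Submodule ℝ (EuclideanSpace ℝ (Fin N) → ℝ)) : 0 ≤ supRayleigh W :=
  Real.sSup_nonneg (Set.forall_mem_image.2 fun f _ => rayleighQuotient_nonneg f)

lemma supRayleigh_span_range {u : Fin k → EuclideanSpace ℝ (Fin N) → ℝ}
    (hu : LinearIndependent ℝ u) :
    supRayleigh (Submodule.span ℝ (Set.range u)) = sSup {r | ∃ c : Fin k → ℝ, c ≠ 0 ∧
      r = (∫ x, lapN (fun y => ∑ i, c i * u i y) x ^ 2) / ∫ x, (∑ i, c i * u i x) ^ 2} := by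
  have hsum : ∀ c : Fin k → ℝ, ∑ i, c i • u i = fun y => ∑ i, c i * u i y := fun c => by
    ext y
    simp
  have hzero : ∀ c : Fin k → ℝ, ∑ i, c i • u i = 0 ↔ c = 0 := fun c =>
    ⟨fun h => funext (Fintype.linearIndependent_iff.1 hu c h), fun h => by simp [h]⟩
  rw [supRayleigh]
  congr 1
  ext r
  constructor
  · rintro ⟨f, ⟨hf, hf₀⟩, rfl⟩
    obtain ⟨c, rfl⟩ := (Submodule.mem_span_range_iff_exists_fun ℝ).1 hf
    exact ⟨c, mt (hzero c).2 hf₀, by rw [rayleighQuotient, hsum]⟩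
  · rintro ⟨c, hc, rfl⟩
    exact ⟨∑ i, c i • u i, ⟨(Submodule.mem_span_range_iff_exists_fun ℝ).2 ⟨c, rfl⟩,
      mt (hzero c).1 hc⟩, by rw [rayleighQuotient, hsum]⟩

lemma lamkN_eq_sInf_supRayleigh (N k : ℕ) (Ω : Set (EuclideanSpace ℝ (Fin N))) :
    lamkN N k Ω = sInf {μ | ∃ W ≤ testFunctions Ω, Module.rank ℝ W = k ∧ μ = supRayleigh W} := by
  rw [lamkN]
  congr 1
  ext μ
  constructor
  · rintro ⟨u, hadm, hu, rfl⟩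
    exact ⟨_, Submodule.span_le.2 (Set.range_subset_iff.2 hadm), rank_span_range_fin hu,
      (supRayleigh_span_range hu).symm⟩
  · rintro ⟨W, hW, hk, rfl⟩
    have := Module.finite_of_rank_eq_nat hk
    let B := Module.finBasisOfFinrankEq ℝ W (Module.finrank_eq_of_rank_eq hk)
    have hB : LinearIndependent ℝ (W.subtype ∘ B) := B.linearIndependent.map' _ W.ker_subtype
    have hspan : Submodule.span ℝ (Set.range (W.subtype ∘ B)) = W := by
      rw [Set.range_comp, Submodule.span_image, B.span_eq, Submodule.map_subtype_top]
    refine ⟨W.subtype ∘ B, fun i => hW (B i).2, hB, ?_⟩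
    rw [← supRayleigh_span_range hB, hspan]

lemma bddAbove_rayleighQuotient [FiniteDimensional ℝ W] (hW : W ≤ testFunctions Ω) :
    BddAbove (rayleighQuotient '' {f ∈ W | f ≠ 0}) := by
  obtain ⟨C, hC⟩ := exists_integral_lapN_sq_le hW
  refine ⟨C, Set.forall_mem_image.2 fun f hf => ?_⟩
  exact (div_le_iff₀ (integral_sq_pos_of_mem_testFunctions (hW hf.1) hf.2)).2 (hC f hf.1)

lemma integral_lapN_sq_le_supRayleigh_mul [FiniteDimensional ℝ W] (hW : W ≤ testFunctions Ω)
    {u : EuclideanSpace ℝ (Fin N) → ℝ} (hu : u ∈ W) :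
    ∫ x, lapN u x ^ 2 ≤ supRayleigh W * ∫ x, u x ^ 2 := by
  rcases eq_or_ne u 0 with rfl | hu₀
  · simp [lapN]
  · rw [← div_le_iff₀ (integral_sq_pos_of_mem_testFunctions (hW hu) hu₀)]
    exact le_csSup (bddAbove_rayleighQuotient hW) ⟨u, ⟨hu, hu₀⟩, rfl⟩

lemma lamkN_nonneg (N k : ℕ) (Ω : Set (EuclideanSpace ℝ (Fin N))) : 0 ≤ lamkN N k Ω := by
  rw [lamkN_eq_sInf_supRayleigh]
  refine Real.sInf_nonneg ?_
  rintro _ ⟨W, -, -, rfl⟩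
  exact supRayleigh_nonneg W

lemma lamStar_nonneg (N k : ℕ) : 0 ≤ lamStar N k := by
  refine Real.sInf_nonneg ?_
  rintro _ ⟨Ω, -, -, rfl⟩
  exact lamkN_nonneg N k Ω

lemma lamStar_le_lamkN (k : ℕ) (hΩ : IsOpen Ω) (hvol : volume Ω = 1) :
    lamStar N k ≤ lamkN N k Ω := by
  refine csInf_le ⟨0, ?_⟩ ⟨Ω, hΩ, hvol, rfl⟩
  rintro _ ⟨Ω', -, -, rfl⟩
  exact lamkN_nonneg N k Ω'

end MinMax

/-- `W` is a `k`-dimensional space of test functions on `V` whose Rayleigh quotients are at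
most `Λ`; such a space certifies `λ_k(V) ≤ Λ`. -/
structure IsTrialSpace {N : ℕ} (k : ℕ) (Λ : ℝ) (V : Set (EuclideanSpace ℝ (Fin N)))
    (W : Submodule ℝ (EuclideanSpace ℝ (Fin N) → ℝ)) : Prop where
  rank_eq : Module.rank ℝ W = k
  le_testFunctions : W ≤ testFunctions V
  integral_le : ∀ u ∈ W, ∫ x, lapN u x ^ 2 ≤ Λ * ∫ x, u x ^ 2

namespace IsTrialSpace

variable {N k l : ℕ} {Λ : ℝ} {V V' : Set (EuclideanSpace ℝ (Fin N))}
  {W W' : Submodule ℝ (EuclideanSpace ℝ (Fin N) → ℝ)}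

lemma finiteDimensional (h : IsTrialSpace k Λ V W) : FiniteDimensional ℝ W :=
  Module.finite_of_rank_eq_nat h.rank_eq

lemma mono (h : IsTrialSpace k Λ V W) {Λ' : ℝ} (hΛ : Λ ≤ Λ') : IsTrialSpace k Λ' V W where
  rank_eq := h.rank_eq
  le_testFunctions := h.le_testFunctions
  integral_le u hu := (h.integral_le u hu).trans <|
    mul_le_mul_of_nonneg_right hΛ (integral_nonneg fun _ => sq_nonneg _)

lemma bot : IsTrialSpace 0 Λ V (⊥ : Submodule ℝ (EuclideanSpace ℝ (Fin N) → ℝ)) where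
  rank_eq := by simp
  le_testFunctions := bot_le
  integral_le u hu := by
    obtain rfl := (Submodule.mem_bot ℝ).1 hu
    simp [lapN]

lemma nonempty (h : IsTrialSpace k Λ V W) (hk : k ≠ 0) : V.Nonempty := by
  rw [Set.nonempty_iff_ne_empty]
  rintro rfl
  have hW : W = ⊥ := le_bot_iff.1 (h.le_testFunctions.trans_eq testFunctions_empty)
  exact hk (Nat.cast_eq_zero.1 (by rw [← h.rank_eq, hW, rank_bot]))

lemma exists_isBounded_subset (h : IsTrialSpace k Λ V W) (hV : IsOpen V) :
    ∃ V₀ ⊆ V, IsOpen V₀ ∧ Bornology.IsBounded V₀ ∧ IsTrialSpace k Λ V₀ W := by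
  have := h.finiteDimensional
  obtain ⟨R, hR⟩ := exists_le_testFunctions_inter_ball h.le_testFunctions
  exact ⟨V ∩ Metric.ball 0 R, Set.inter_subset_left, hV.inter Metric.isOpen_ball,
    Metric.isBounded_ball.subset Set.inter_subset_right, h.rank_eq, hR, h.integral_le⟩

lemma sup (h : IsTrialSpace k Λ V W) (h' : IsTrialSpace l Λ V' W') (hd : Disjoint V V') :
    IsTrialSpace (k + l) Λ (V ∪ V') (W ⊔ W') where
  rank_eq := by
    have hinf : W ⊓ W' = ⊥ :=
      ((disjoint_testFunctions hd).mono h.le_testFunctions h'.le_testFunctions).eq_bot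
    have hrank := Submodule.rank_sup_add_rank_inf_eq W W'
    rw [hinf, rank_bot, add_zero, h.rank_eq, h'.rank_eq] at hrank
    rw [hrank, Nat.cast_add]
  le_testFunctions := sup_le
    (h.le_testFunctions.trans (testFunctions_mono Set.subset_union_left))
    (h'.le_testFunctions.trans (testFunctions_mono Set.subset_union_right))
  integral_le u hu := by
    obtain ⟨f, hf, g, hg, rfl⟩ := Submodule.mem_sup.1 hu
    have hfV := h.le_testFunctions hf
    have hgV := h'.le_testFunctions hg
    have hfg : Disjoint (tsupport f) (tsupport g) := hd.mono hfV.2.2 hgV.2.2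
    rw [lapN_add (contDiff_two_of_mem_testFunctions hfV) (contDiff_two_of_mem_testFunctions hgV),
      integral_add_sq_of_disjoint_support (memLp_lapN_of_mem_testFunctions hfV)
        (memLp_lapN_of_mem_testFunctions hgV)
        (hfg.mono (support_lapN_subset f) (support_lapN_subset g)),
      integral_add_sq_of_disjoint_support (memLp_of_mem_testFunctions hfV)
        (memLp_of_mem_testFunctions hgV) (hfg.mono (subset_tsupport f) (subset_tsupport g)),
      mul_add]
    exact add_le_add (h.integral_le f hf) (h'.integral_le g hg)

lemma exists_preimage_homothety (h : IsTrialSpace k Λ V W) {s : ℝ} (hs : s ≠ 0)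
    (b : EuclideanSpace ℝ (Fin N)) :
    ∃ W', IsTrialSpace k (s ^ 4 * Λ) (homothety hs b ⁻¹' V) W' := by
  let T := LinearEquiv.funCongrLeft ℝ ℝ (homothety hs b).toEquiv
  refine ⟨W.map T.toLinearMap, (T.rank_map_eq W).trans h.rank_eq, ?_, ?_⟩
  · rintro _ ⟨u, hu, rfl⟩
    exact comp_homothety_mem_testFunctions hs b (h.le_testFunctions hu)
  · rintro _ ⟨u, hu, rfl⟩
    have hlap : ∫ x, lapN (u ∘ homothety hs b) x ^ 2 =
        s ^ 4 * (|(s ^ Module.finrank ℝ (EuclideanSpace ℝ (Fin N)))⁻¹| • ∫ x, lapN u x ^ 2) := by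
      rw [← integral_comp_homothety volume hs b, ← integral_const_mul, lapN_comp_homothety]
      congr with x
      rw [Pi.smul_apply, Function.comp_apply, smul_eq_mul]
      ring
    have hsq : ∫ x, (u ∘ homothety hs b) x ^ 2 =
        |(s ^ Module.finrank ℝ (EuclideanSpace ℝ (Fin N)))⁻¹| • ∫ x, u x ^ 2 :=
      integral_comp_homothety volume hs b fun x => u x ^ 2
    change ∫ x, lapN (u ∘ homothety hs b) x ^ 2 ≤ s ^ 4 * Λ * ∫ x, (u ∘ homothety hs b) x ^ 2
    rw [hlap, hsq, smul_eq_mul, smul_eq_mul, mul_assoc, mul_left_comm Λ]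
    gcongr
    exact h.integral_le u hu

lemma lamkN_le (h : IsTrialSpace k Λ V W) (hΛ : 0 ≤ Λ) : lamkN N k V ≤ Λ := by
  rw [lamkN_eq_sInf_supRayleigh]
  have hbdd : BddBelow {μ | ∃ W ≤ testFunctions V, Module.rank ℝ W = k ∧ μ = supRayleigh W} :=
    ⟨0, fun _ ⟨W, _, _, hμ⟩ => hμ ▸ supRayleigh_nonneg W⟩
  refine (csInf_le hbdd ⟨W, h.le_testFunctions, h.rank_eq, rfl⟩).trans (Real.sSup_le ?_ hΛ)
  refine Set.forall_mem_image.2 fun f hf => ?_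
  exact div_le_of_le_mul₀ (integral_nonneg fun _ => sq_nonneg _) hΛ (h.integral_le f hf.1)

end IsTrialSpace

lemma exists_isTrialSpace_of_lamkN_lt {N k : ℕ} [NeZero N] {Λ : ℝ}
    {Ω : Set (EuclideanSpace ℝ (Fin N))} (hΩ : IsOpen Ω) (hne : Ω.Nonempty)
    (h : lamkN N k Ω < Λ) : ∃ W, IsTrialSpace k Λ Ω W := by
  obtain ⟨W₀, hW₀, hk₀⟩ := exists_le_testFunctions_rank_eq hΩ hne k
  rw [lamkN_eq_sInf_supRayleigh] at h
  obtain ⟨_, ⟨W, hW, hk, rfl⟩, hlt⟩ :=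
    exists_lt_of_csInf_lt (by exact ⟨_, W₀, hW₀, hk₀, rfl⟩) h
  have := Module.finite_of_rank_eq_nat hk
  have htrial : IsTrialSpace k (supRayleigh W) Ω W :=
    ⟨hk, hW, fun u hu => integral_lapN_sq_le_supRayleigh_mul hW hu⟩
  exact ⟨W, htrial.mono hlt.le⟩

section TrialVolume

variable {N k : ℕ}

/-- The least volume of an open set carrying a `k`-dimensional space of test functions with
Rayleigh quotients at most `1`; it equals `(λ_k*)^{N/4}` for `k ≥ 1`. -/
def trialVolume (N k : ℕ) : ENNReal :=
  ⨅ (V : Set (EuclideanSpace ℝ (Fin N))) (_ : IsOpen V ∧ ∃ W, IsTrialSpace k 1 V W), volume V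

lemma trialVolume_le {V : Set (EuclideanSpace ℝ (Fin N))}
    {W : Submodule ℝ (EuclideanSpace ℝ (Fin N) → ℝ)} (hV : IsOpen V) (h : IsTrialSpace k 1 V W) :
    trialVolume N k ≤ volume V :=
  iInf₂_le V ⟨hV, W, h⟩

lemma trialVolume_zero (N : ℕ) : trialVolume N 0 = 0 := by
  simpa using trialVolume_le (N := N) isOpen_empty IsTrialSpace.bot

lemma trialVolume_add_le [NeZero N] (k l : ℕ) :
    trialVolume N (k + l) ≤ trialVolume N k + trialVolume N l := by
  refine ENNReal.le_iInf₂_add_iInf₂ ?_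
  rintro V ⟨hV, W, hW⟩ V' ⟨hV', W', hW'⟩
  obtain ⟨U, hUV, hU, hUb, hUW⟩ := hW.exists_isBounded_subset hV
  obtain ⟨U', hUV', hU', hUb', hUW'⟩ := hW'.exists_isBounded_subset hV'
  obtain ⟨b, hb⟩ := exists_disjoint_preimage_homothety hUb hUb'
  obtain ⟨W'', hW''⟩ := hUW'.exists_preimage_homothety one_ne_zero b
  rw [one_pow, one_mul] at hW''
  have hopen := hU'.preimage (homothety one_ne_zero b).continuous
  calc trialVolume N (k + l)
      ≤ volume (U ∪ homothety one_ne_zero b ⁻¹' U') :=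
        trialVolume_le (hU.union hopen) (hUW.sup hW'' hb)
    _ ≤ volume U + volume (homothety one_ne_zero b ⁻¹' U') := measure_union_le _ _
    _ = volume U + volume U' := by
        rw [measure_preimage_homothety, one_pow, inv_one, abs_one, ENNReal.ofReal_one, one_mul]
    _ ≤ volume V + volume V' := add_le_add (measure_mono hUV) (measure_mono hUV')

lemma trialVolume_sum_le [NeZero N] {ι : Type*} (s : Finset ι) (i : ι → ℕ) :
    trialVolume N (∑ j ∈ s, i j) ≤ ∑ j ∈ s, trialVolume N (i j) :=
  Finset.le_sum_of_subadditive _ (trialVolume_zero N).le trialVolume_add_le s i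

lemma pow_four_rpow_natCast_div_four {t : ℝ} (ht : 0 ≤ t) (n : ℕ) :
    (t ^ 4) ^ ((n : ℝ) / 4) = t ^ n := by
  rw [← Real.rpow_natCast, ← Real.rpow_mul ht, Nat.cast_ofNat, mul_div_cancel₀ _ four_ne_zero,
    Real.rpow_natCast]

lemma ofReal_lamStar_rpow_le_trialVolume [NeZero N] (hk : k ≠ 0) :
    ENNReal.ofReal (lamStar N k ^ ((N : ℝ) / 4)) ≤ trialVolume N k := by
  refine le_iInf₂ ?_
  rintro V ⟨hV, W, hW⟩
  rcases eq_or_ne (volume V) ⊤ with htop | htop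
  · exact htop ▸ le_top
  obtain ⟨s, hs, hsN, hvol⟩ := exists_measure_preimage_homothety_eq_one volume
    (hV.measure_pos volume (hW.nonempty hk)).ne' htop
  obtain ⟨W', hW'⟩ := hW.exists_preimage_homothety hs.ne' 0
  have hle : lamStar N k ≤ s ^ 4 := by
    refine (lamStar_le_lamkN k (hV.preimage (homothety hs.ne' 0).continuous) hvol).trans ?_
    exact mul_one (s ^ 4) ▸ hW'.lamkN_le (by positivity)
  rw [finrank_euclideanSpace_fin] at hsN
  refine ENNReal.ofReal_le_of_le_toReal ?_
  calc lamStar N k ^ ((N : ℝ) / 4) ≤ (s ^ 4) ^ ((N : ℝ) / 4) :=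
        Real.rpow_le_rpow (lamStar_nonneg N k) hle (by positivity)
    _ = (volume V).toReal := by rw [pow_four_rpow_natCast_div_four hs.le, hsN]

lemma exists_isOpen_volume_eq_one (N : ℕ) [NeZero N] :
    ∃ Ω : Set (EuclideanSpace ℝ (Fin N)), IsOpen Ω ∧ volume Ω = 1 := by
  obtain ⟨s, hs, -, hvol⟩ := exists_measure_preimage_homothety_eq_one volume
    (Metric.measure_ball_pos volume (0 : EuclideanSpace ℝ (Fin N)) one_pos).ne'
    measure_ball_lt_top.ne
  exact ⟨_, Metric.isOpen_ball.preimage (homothety hs.ne' 0).continuous, hvol⟩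

lemma trialVolume_le_of_lamStar_lt [NeZero N] {t : ℝ} (ht : 0 < t) (h : lamStar N k < t ^ 4) :
    trialVolume N k ≤ ENNReal.ofReal (t ^ N) := by
  obtain ⟨Ω₀, hΩ₀, hvol₀⟩ := exists_isOpen_volume_eq_one N
  rw [lamStar] at h
  obtain ⟨_, ⟨Ω, hΩ, hvol, rfl⟩, hlt⟩ :=
    exists_lt_of_csInf_lt (by exact ⟨_, Ω₀, hΩ₀, hvol₀, rfl⟩) h
  have hne : Ω.Nonempty := nonempty_of_measure_ne_zero (hvol.trans_ne one_ne_zero)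
  obtain ⟨W, hW⟩ := exists_isTrialSpace_of_lamkN_lt hΩ hne hlt
  obtain ⟨W', hW'⟩ := hW.exists_preimage_homothety (inv_ne_zero ht.ne') 0
  rw [← mul_pow, inv_mul_cancel₀ ht.ne', one_pow] at hW'
  refine (trialVolume_le (hΩ.preimage (homothety _ 0).continuous) hW').trans_eq ?_
  rw [measure_preimage_homothety, hvol, mul_one, finrank_euclideanSpace_fin, inv_pow, inv_inv,
    abs_of_pos (pow_pos ht N)]

lemma trialVolume_le_ofReal_lamStar_rpow (N k : ℕ) [NeZero N] :
    trialVolume N k ≤ ENNReal.ofReal (lamStar N k ^ ((N : ℝ) / 4)) := by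
  obtain ⟨l, hl, hlam⟩ : ∃ l : ℝ, 0 ≤ l ∧ l ^ 4 = lamStar N k :=
    ⟨_, Real.rpow_nonneg (lamStar_nonneg N k) _,
      Real.rpow_inv_natCast_pow (lamStar_nonneg N k) four_ne_zero⟩
  have hlim : Tendsto (fun t : ℝ => ENNReal.ofReal (t ^ N)) (nhdsWithin l (Set.Ioi l))
      (nhds (ENNReal.ofReal (l ^ N))) :=
    (ENNReal.continuous_ofReal.comp (continuous_pow N)).continuousWithinAt
  rw [← hlam, pow_four_rpow_natCast_div_four hl]
  refine ge_of_tendsto hlim (eventually_nhdsWithin_of_forall fun t ht => ?_)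
  exact trialVolume_le_of_lamStar_lt (hl.trans_lt ht)
    (hlam ▸ pow_lt_pow_left₀ ht hl four_ne_zero)

lemma ofReal_lamStar_rpow_eq_trialVolume [NeZero N] (hk : k ≠ 0) :
    ENNReal.ofReal (lamStar N k ^ ((N : ℝ) / 4)) = trialVolume N k :=
  (ofReal_lamStar_rpow_le_trialVolume hk).antisymm (trialVolume_le_ofReal_lamStar_rpow N k)

end TrialVolume

theorem lamStar_subadditive_general {N : ℕ} [NeZero N] {ι : Type*} {s : Finset ι}
    (hs : s.Nonempty) {i : ι → ℕ} (hi : ∀ j ∈ s, i j ≠ 0) :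
    lamStar N (∑ j ∈ s, i j) ^ ((N : ℝ) / 4) ≤ ∑ j ∈ s, lamStar N (i j) ^ ((N : ℝ) / 4) := by
  have hsum : ∑ j ∈ s, i j ≠ 0 := fun h => by
    obtain ⟨j, hj⟩ := hs
    exact hi j hj (Finset.sum_eq_zero_iff.1 h j hj)
  have hnonneg : ∀ j ∈ s, 0 ≤ lamStar N (i j) ^ ((N : ℝ) / 4) := fun j _ =>
    Real.rpow_nonneg (lamStar_nonneg N (i j)) _
  rw [← ENNReal.ofReal_le_ofReal_iff (Finset.sum_nonneg hnonneg),
    ENNReal.ofReal_sum_of_nonneg hnonneg, ofReal_lamStar_rpow_eq_trialVolume hsum,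
    Finset.sum_congr rfl fun j hj => ofReal_lamStar_rpow_eq_trialVolume (hi j hj)]
  exact trialVolume_sum_le s i

/-- Subadditivity of minimal Dirichlet biharmonic eigenvalues: if
`i_1 ≤ … ≤ i_p` are positive integers with `i_1 + … + i_p = k`, then
`(λ_k*)^{N/4} ≤ (λ_{i_1}*)^{N/4} + … + (λ_{i_p}*)^{N/4}`; in particular
`(λ_{k+1}*)^{N/4} − (λ_k*)^{N/4} ≤ (λ_1*)^{N/4}`. -/
theorem lamStar_subadditive (N : ℕ) (hN : 2 ≤ N) :
    (∀ (k p : ℕ) (i : Fin p → ℕ), 1 ≤ p → (∀ j, 1 ≤ i j) → Monotone i →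
      ∑ j, i j = k →
      (lamStar N k) ^ ((N : ℝ) / 4) ≤ ∑ j, (lamStar N (i j)) ^ ((N : ℝ) / 4)) ∧
    (∀ k : ℕ, 1 ≤ k →
      (lamStar N (k + 1)) ^ ((N : ℝ) / 4) - (lamStar N k) ^ ((N : ℝ) / 4) ≤
        (lamStar N 1) ^ ((N : ℝ) / 4)) := by
  have : NeZero N := ⟨by omega⟩
  refine ⟨fun k p i hp hi _ hk => ?_, fun k hk => sub_le_iff_le_add'.2 ?_⟩
  · have : Nonempty (Fin p) := ⟨⟨0, hp⟩⟩
    exact hk ▸ lamStar_subadditive_general Finset.univ_nonempty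
      fun j _ => Nat.one_le_iff_ne_zero.1 (hi j)
  · simpa using lamStar_subadditive_general (N := N) (s := Finset.univ) (i := ![k, 1])
      Finset.univ_nonempty (by simp [Nat.one_le_iff_ne_zero.1 hk])
end
end
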